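/- There exists a uniquely ergodic C^∞ diffeomorphism T of the torus 𝕋² whose unique invariant Borel probability measure is the Haar–Lebesgue measure λ, such that T is measure-theoretically isomorphic to the rotation of the circle by some irrational number and the upper topological slow entropy of T with respect to the logarithmic scaling family a^{ln}_m(t) = (ln m)^t equals 1. -/

import Mathlib

open MeasureTheory Filter Set
open scoped Topology ENNReal NNReal

noncomputable section

/-- The Bowen metric `d_n^T(x,y) = max_{0 ≤ i ≤ n-1} d(T^i x, T^i y)`. -/
def bowenDist {X : Type*} [PseudoMetricSpace X] (T : X → X) (n : ℕ) (x y : X) : ℝ :=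
  (((Finset.range n).sup fun i => nndist (T^[i] x) (T^[i] y)) : ℝ≥0)

/-- `N_{d_n^T}(ε)`: the minimal number of `(ε,n)`-Bowen balls of `T` needed to cover the
whole space. -/
def bowenCoverNum {X : Type*} [PseudoMetricSpace X] (T : X → X) (n : ℕ) (ε : ℝ) : ℕ :=
  sInf {N : ℕ | ∃ F : Finset X, F.card = N ∧ ∀ y : X, ∃ x ∈ F, bowenDist T n x y < ε}

/-- `N(ε)`: the supremum (`0` if the set is empty, by the `Real.sSup` convention) of all
`t > 0` such that `limsup_n N_{d_n^T}(ε) / a_n(t) > 0`. -/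
def topSlowEntFun {X : Type*} [PseudoMetricSpace X] (T : X → X) (a : ℕ → ℝ → ℝ) (ε : ℝ) : ℝ :=
  sSup {t : ℝ | 0 < t ∧
    0 < Filter.atTop.limsup fun n => (bowenCoverNum T n ε : ℝ≥0∞) / ENNReal.ofReal (a n t)}

/-- The upper topological slow entropy of `T` with respect to the scaling family `a`
equals `E`, i.e. `N(ε) → E` as `ε → 0⁺`. -/
def HasUpperTopSlowEntropy {X : Type*} [PseudoMetricSpace X] (T : X → X)
    (a : ℕ → ℝ → ℝ) (E : ℝ) : Prop :=
  Filter.Tendsto (topSlowEntFun T a) (𝓝[>] (0 : ℝ)) (𝓝 E)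

/-- The circle `𝕋¹ = ℝ/ℤ` with its quotient metric and Haar–Lebesgue probability
measure `volume`. -/
abbrev Torus1 : Type := AddCircle (1 : ℝ)

/-- The 2-torus `𝕋² = ℝ²/ℤ²`, with its quotient (flat) metric, its Borel σ-algebra and
its Haar–Lebesgue probability measure `volume`. -/
abbrev Torus2 : Type := AddCircle (1 : ℝ) × AddCircle (1 : ℝ)

/-- Canonical projection `ℝ² → 𝕋²`. -/
def torusProj : ℝ × ℝ → Torus2 := fun p => ((p.1 : Torus1), (p.2 : Torus1))

/-- `F : ℝ² → ℝ²` is a lift of `T : 𝕋² → 𝕋²`. -/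
def IsLiftOf (F : ℝ × ℝ → ℝ × ℝ) (T : Torus2 → Torus2) : Prop :=
  ∀ p, torusProj (F p) = T (torusProj p)

/-- `T` is a `C^k` diffeomorphism of the torus: it is a bijection and both `T` and `T⁻¹`
admit `C^k` lifts to the universal cover `ℝ²`. -/
def IsCkTorusDiffeo (k : ℕ∞) (T : Torus2 → Torus2) : Prop :=
  Function.Bijective T ∧
  (∃ F : ℝ × ℝ → ℝ × ℝ, ContDiff ℝ k F ∧ IsLiftOf F T) ∧
  (∃ G : ℝ × ℝ → ℝ × ℝ, ContDiff ℝ k G ∧ IsLiftOf G (Function.invFun T))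

/-- `T` is weakly mixing w.r.t. the measure `μ`: `T × T` is ergodic for `μ × μ`. -/
def WeaklyMixing {X : Type*} [MeasurableSpace X] (T : X → X) (μ : Measure X) : Prop :=
  Ergodic (fun p : X × X => (T p.1, T p.2)) (μ.prod μ)

/-- `T` is uniquely ergodic with the Haar–Lebesgue measure `volume` as its unique
invariant Borel probability measure. -/
def UniquelyErgodicWithVolume (T : Torus2 → Torus2) : Prop :=
  MeasurePreserving T volume volume ∧
  ∀ μ : Measure Torus2, IsProbabilityMeasure μ → MeasurePreserving T μ μ → μ = volume

/-- `T` (preserving the Haar measure `volume` on `𝕋²`) is measure-theoretically isomorphic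
to the rotation of the circle `𝕋¹ = ℝ/ℤ` by some irrational number `α`. -/
def IsoToIrrationalRotation (T : Torus2 → Torus2) : Prop :=
  ∃ α : ℝ, Irrational α ∧
    ∃ (A : Set Torus2) (B : Set Torus1) (ψ : Torus2 → Torus1) (φ : Torus1 → Torus2),
      MeasurableSet A ∧ MeasurableSet B ∧
      volume Aᶜ = 0 ∧ volume Bᶜ = 0 ∧
      Set.MapsTo T A A ∧ Set.MapsTo (fun y : Torus1 => y + (α : Torus1)) B B ∧
      Measurable ψ ∧ Measurable φ ∧
      Set.MapsTo ψ A B ∧ Set.MapsTo φ B A ∧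
      (∀ x ∈ A, φ (ψ x) = x) ∧ (∀ y ∈ B, ψ (φ y) = y) ∧
      Measure.map ψ volume = volume ∧
      (∀ x ∈ A, ψ (T x) = ψ x + (α : Torus1))

/-- A finite measurable partition of `X`. -/
structure FinMeasPartition (X : Type*) [MeasurableSpace X] where
  card : ℕ
  piece : Fin card → Set X
  measurable : ∀ i, MeasurableSet (piece i)
  disjoint : Pairwise fun i j => Disjoint (piece i) (piece j)
  cover : (⋃ i, piece i) = Set.univ

open Classical in
/-- The normalized Hamming distance between the length-`n` `P`-codings of the `T`-orbits
of `x` and `y` (the codings differ at time `k` iff `T^k x` and `T^k y` lie in different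
pieces of `P`). -/
def codeHammingDist {X : Type*} [MeasurableSpace X] (T : X → X) (P : FinMeasPartition X)
    (n : ℕ) (x y : X) : ℝ :=
  (((Finset.range n).filter fun k =>
      ¬ ∃ i, T^[k] x ∈ P.piece i ∧ T^[k] y ∈ P.piece i).card : ℝ) / n

/-- `S^H_P(T,n,ε)`: the minimal number of `(ε,n)`-Hamming balls whose union has
`μ`-measure greater than `1 - ε`. -/
def hammingCoverNum {X : Type*} [MeasurableSpace X] (μ : Measure X) (T : X → X)
    (P : FinMeasPartition X) (n : ℕ) (ε : ℝ) : ℕ :=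
  sInf {N : ℕ | ∃ F : Finset X, F.card = N ∧
    ENNReal.ofReal (1 - ε) < μ (⋃ x ∈ F, {y | codeHammingDist T P n x y < ε})}

/-- For a fixed partition `P` and `ε > 0`: the supremum (with the `Real.sSup` convention,
`0` if the set is empty) of all `t > 0` with `limsup_n S^H_P(T,n,ε)/a_n(t) > 0`. -/
def measSlowEntFun {X : Type*} [MeasurableSpace X] (μ : Measure X) (T : X → X)
    (a : ℕ → ℝ → ℝ) (P : FinMeasPartition X) (ε : ℝ) : ℝ :=
  sSup {t : ℝ | 0 < t ∧
    0 < Filter.atTop.limsup fun n =>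
      (hammingCoverNum μ T P n ε : ℝ≥0∞) / ENNReal.ofReal (a n t)}

/-- The upper measure-theoretic slow entropy of `(T,μ)` w.r.t. the scaling family `a`
equals `E`: for every finite measurable partition the limit as `ε → 0⁺` exists, and the
least upper bound over all partitions of these limits is `E`. -/
def HasUpperMeasSlowEntropy {X : Type*} [MeasurableSpace X] (μ : Measure X) (T : X → X)
    (a : ℕ → ℝ → ℝ) (E : ℝ) : Prop :=
  (∀ P : FinMeasPartition X, ∃ e : ℝ,
      Filter.Tendsto (measSlowEntFun μ T a P) (𝓝[>] (0 : ℝ)) (𝓝 e)) ∧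
  IsLUB {e : ℝ | ∃ P : FinMeasPartition X,
      Filter.Tendsto (measSlowEntFun μ T a P) (𝓝[>] (0 : ℝ)) (𝓝 e)} E

/-- `Γ_r(x) = (Γ(x^{1/r} + 1))^r`, where `Γ` is the Euler Gamma function. -/
def GammaR (r : ℕ) (x : ℝ) : ℝ := (Real.Gamma (x ^ ((r : ℝ)⁻¹) + 1)) ^ r

/-- The inverse of `Γ_r` on `[1,∞)` (where `Γ_r` is strictly increasing with `Γ_r 1 = 1`). -/
def GammaRInv (r : ℕ) (y : ℝ) : ℝ := sSup {x : ℝ | 1 ≤ x ∧ GammaR r x ≤ y}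

/-- The intermediate scaling family `a^{int1,r}_m(t) = m^(t / Γ_r⁻¹(ln m / ln q₁))`. -/
def intScale1 (r q₁ : ℕ) (m : ℕ) (t : ℝ) : ℝ :=
  (m : ℝ) ^ (t / GammaRInv r (Real.log m / Real.log q₁))

/-- The intermediate scaling family
`a^{int2,r}_m(t) = m^(t / (Γ_r⁻¹(ln m / ln q₁))^((r-2)/r))`. -/
def intScale2 (r q₁ : ℕ) (m : ℕ) (t : ℝ) : ℝ :=
  (m : ℝ) ^ (t / GammaRInv r (Real.log m / Real.log q₁) ^ (((r : ℝ) - 2) / (r : ℝ)))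

/-- The logarithmic scaling family `a^{ln}_m(t) = (ln m)^t`. -/
def logScale (m : ℕ) (t : ℝ) : ℝ := Real.log m ^ t

/-- The polynomial scaling family `a^{pol}_m(t) = m^t`. -/
def polScale (m : ℕ) (t : ℝ) : ℝ := (m : ℝ) ^ t

end


open MeasureTheory Filter Set
open scoped Topology ENNReal NNReal ContDiff

noncomputable section

/-! ### Families of smooth maps with polynomially bounded derivatives -/

/-- A family `f L` of smooth maps whose derivatives of every order `≥ 1` are bounded by a
polynomial in the parameter `L`. -/
def PB {E F : Type*} [NormedAddCommGroup E] [NormedSpace ℝ E] [NormedAddCommGroup F]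
    [NormedSpace ℝ F] (f : ℕ → E → F) : Prop :=
  (∀ L, 3 ≤ L → ContDiff ℝ ∞ (f L)) ∧
  ∀ k, 1 ≤ k → ∃ (C : ℝ) (p : ℕ), 0 ≤ C ∧ ∀ L, 3 ≤ L → ∀ z,
    ‖iteratedFDeriv ℝ k (f L) z‖ ≤ C * (L : ℝ) ^ p

section PB
variable {E F G : Type*} [NormedAddCommGroup E] [NormedSpace ℝ E] [NormedAddCommGroup F]
    [NormedSpace ℝ F] [NormedAddCommGroup G] [NormedSpace ℝ G]

lemma PB.uniform {f : ℕ → E → F} (hf : PB f) (k : ℕ) :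
    ∃ (C : ℝ) (p : ℕ), 1 ≤ C ∧ ∀ j, 1 ≤ j → j ≤ k → ∀ L, 3 ≤ L → ∀ z,
      ‖iteratedFDeriv ℝ j (f L) z‖ ≤ C * (L : ℝ) ^ p := by
  induction k with
  | zero => exact ⟨1, 0, le_rfl, fun j h1 h2 => by omega⟩
  | succ k ih =>
    obtain ⟨C, p, hC, h⟩ := ih
    obtain ⟨C', p', hC', h'⟩ := hf.2 (k + 1) (by omega)
    refine ⟨C + C', p + p', by linarith, fun j h1 h2 L hL z => ?_⟩
    have hL1 : (1 : ℝ) ≤ L := by exact_mod_cast (by omega : 1 ≤ L)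
    have e1 : (L : ℝ) ^ p ≤ (L : ℝ) ^ (p + p') := pow_le_pow_right₀ hL1 (by omega)
    have e2 : (L : ℝ) ^ p' ≤ (L : ℝ) ^ (p + p') := pow_le_pow_right₀ hL1 (by omega)
    have e3 : (0 : ℝ) ≤ (L : ℝ) ^ (p + p') := by positivity
    rcases Nat.lt_or_ge j (k + 1) with hj | hj
    · calc _ ≤ C * (L : ℝ) ^ p := h j h1 (by omega) L hL z
        _ ≤ C * (L : ℝ) ^ (p + p') := by gcongr
        _ ≤ _ := by gcongr; linarith
    · obtain rfl : j = k + 1 := by omega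
      calc _ ≤ C' * (L : ℝ) ^ p' := h' L hL z
        _ ≤ C' * (L : ℝ) ^ (p + p') := by gcongr
        _ ≤ _ := by gcongr; linarith

lemma PB.comp {g : ℕ → F → G} {f : ℕ → E → F} (hg : PB g) (hf : PB f) :
    PB (fun L => g L ∘ f L) := by
  refine ⟨fun L hL => (hg.1 L hL).comp (hf.1 L hL), fun k hk => ?_⟩
  obtain ⟨C, p, hC, h⟩ := hg.uniform k
  obtain ⟨C', p', hC', h'⟩ := hf.uniform k
  refine ⟨k.factorial * C * C' ^ k, p + p' * k, by positivity, fun L hL z => ?_⟩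
  have hL1 : (1 : ℝ) ≤ L := by exact_mod_cast (by omega : 1 ≤ L)
  set c : G := g L (f L z) with hc
  have hsub : ContDiff ℝ ∞ (fun y => g L y - c) := (hg.1 L hL).sub contDiff_const
  have hD : ∀ j, 1 ≤ j → ∀ (φ : F → G) , ContDiff ℝ ∞ φ → ∀ y,
      iteratedFDeriv ℝ j (fun y => φ y - c) y = iteratedFDeriv ℝ j φ y := by
    intro j hj φ hφ y
    have := iteratedFDeriv_sub_apply (𝕜 := ℝ) (i := j) (f := φ) (g := fun _ => c) (x := y)
      ((hφ.of_le (by exact_mod_cast le_top)).contDiffAt) contDiff_const.contDiffAt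
    have h2 : iteratedFDeriv ℝ j (fun _ : F => c) y = 0 := by
      rw [iteratedFDeriv_const_of_ne (by omega)]; rfl
    rw [h2, sub_zero] at this
    exact this
  have hD' : iteratedFDeriv ℝ k ((fun y => g L y - c) ∘ f L) z
      = iteratedFDeriv ℝ k (g L ∘ f L) z := by
    have := iteratedFDeriv_sub_apply (𝕜 := ℝ) (i := k) (f := g L ∘ f L) (g := fun _ => c) (x := z)
      ((((hg.1 L hL).comp (hf.1 L hL)).of_le (by exact_mod_cast le_top)).contDiffAt)
      contDiff_const.contDiffAt
    have h2 : iteratedFDeriv ℝ k (fun _ : E => c) z = 0 := by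
      rw [iteratedFDeriv_const_of_ne (by omega)]; rfl
    rw [h2, sub_zero] at this
    exact this
  rw [← hD']
  have hCp : 0 ≤ C * (L : ℝ) ^ p := by positivity
  have hD1 : 1 ≤ C' * (L : ℝ) ^ p' := one_le_mul_of_one_le_of_one_le hC' (one_le_pow₀ hL1)
  have := norm_iteratedFDeriv_comp_le (𝕜 := ℝ) (n := k) hsub (hf.1 L hL)
    (by exact_mod_cast le_top) z (C := C * (L : ℝ) ^ p) (D := C' * (L : ℝ) ^ p')
    (by
      intro i hi
      rcases Nat.eq_zero_or_pos i with rfl | hi0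
      · simp only [norm_iteratedFDeriv_zero, hc, sub_self, norm_zero]; exact hCp
      · rw [hD i hi0 _ (hg.1 L hL)]; exact h i hi0 hi L hL _)
    (by
      intro i hi1 hi
      exact (h' i hi1 hi L hL z).trans (le_self_pow₀ hD1 (by omega)))
  refine this.trans (le_of_eq ?_)
  rw [mul_pow, pow_add, pow_mul]; ring

lemma PB.add {f g : ℕ → E → F} (hf : PB f) (hg : PB g) : PB (fun L z => f L z + g L z) := by
  refine ⟨fun L hL => (hf.1 L hL).add (hg.1 L hL), fun k hk => ?_⟩
  obtain ⟨C, p, hC, h⟩ := hf.2 k hk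
  obtain ⟨C', p', hC', h'⟩ := hg.2 k hk
  refine ⟨C + C', p + p', by linarith, fun L hL z => ?_⟩
  have hL1 : (1 : ℝ) ≤ L := by exact_mod_cast (by omega : 1 ≤ L)
  have e1 : (L : ℝ) ^ p ≤ (L : ℝ) ^ (p + p') := pow_le_pow_right₀ hL1 (by omega)
  have e2 : (L : ℝ) ^ p' ≤ (L : ℝ) ^ (p + p') := pow_le_pow_right₀ hL1 (by omega)
  have := iteratedFDeriv_add_apply (𝕜 := ℝ) (i := k) (f := f L) (g := g L) (x := z)
    (((hf.1 L hL).of_le (by exact_mod_cast le_top)).contDiffAt)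
    (((hg.1 L hL).of_le (by exact_mod_cast le_top)).contDiffAt)
  have h3 : iteratedFDeriv ℝ k (fun z => f L z + g L z) z
      = iteratedFDeriv ℝ k (f L) z + iteratedFDeriv ℝ k (g L) z := this
  rw [h3, add_mul]
  refine (norm_add_le _ _).trans (add_le_add ?_ ?_)
  · exact (h L hL z).trans (by gcongr)
  · exact (h' L hL z).trans (by gcongr)

lemma PB.clm_family (A : ℕ → E →L[ℝ] F) (p : ℕ) (C : ℝ) (hA : ∀ L, 3 ≤ L → ‖A L‖ ≤ C * (L : ℝ) ^ p) :
    PB (fun L z => A L z) := by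
  refine ⟨fun L _ => (A L).contDiff, fun k hk => ?_⟩
  have hC : 0 ≤ C := by
    have := (norm_nonneg _).trans (hA 3 le_rfl)
    by_contra hc
    push Not at hc
    have : C * ((3 : ℕ) : ℝ) ^ p < 0 := mul_neg_of_neg_of_pos hc (by positivity)
    linarith
  refine ⟨C, p, hC, fun L hL z => ?_⟩
  obtain ⟨j, rfl⟩ : ∃ j, k = j + 1 := ⟨k - 1, by omega⟩
  rw [← norm_iteratedFDeriv_fderiv]
  have : fderiv ℝ (fun z => A L z) = fun _ => A L := by
    funext z; exact (A L).fderiv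
  rw [this]
  rcases Nat.eq_zero_or_pos j with rfl | hj
  · simpa using hA L hL
  · rw [iteratedFDeriv_const_of_ne (by omega)]
    have : (0:ℝ) ≤ C * (L : ℝ) ^ p := by positivity
    simpa using this

lemma PB.clm (A : E →L[ℝ] F) : PB (fun _ z => A z) :=
  PB.clm_family (fun _ => A) 0 ‖A‖ (by intro L _; simp)

lemma PB.const (c : F) : PB (fun (_ : ℕ) (_ : E) => c) := by
  refine ⟨fun L _ => contDiff_const, fun k hk => ⟨0, 0, le_rfl, fun L hL z => ?_⟩⟩
  rw [iteratedFDeriv_const_of_ne (by omega)]; simp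

lemma PB.clm_comp (A : F →L[ℝ] G) {f : ℕ → E → F} (hf : PB f) : PB (fun L z => A (f L z)) :=
  (PB.clm A).comp hf

lemma PB.const_mul (c : ℝ) {f : ℕ → E → ℝ} (hf : PB f) : PB (fun L z => c * f L z) := by
  have := PB.clm_comp (c • ContinuousLinearMap.id ℝ ℝ) hf
  simpa using this

lemma PB.sub {f g : ℕ → E → F} (hf : PB f) (hg : PB g) : PB (fun L z => f L z - g L z) := by
  have := hf.add (PB.clm_comp (-ContinuousLinearMap.id ℝ F) hg)
  simpa [sub_eq_add_neg] using this

lemma PB.prodMk {f : ℕ → E → F} {g : ℕ → E → G} (hf : PB f) (hg : PB g) :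
    PB (fun L z => (f L z, g L z)) := by
  have := (PB.clm_comp (ContinuousLinearMap.inl ℝ F G) hf).add
    (PB.clm_comp (ContinuousLinearMap.inr ℝ F G) hg)
  simpa using this

lemma PB.fst {f : ℕ → E → F × G} (hf : PB f) : PB (fun L z => (f L z).1) :=
  PB.clm_comp (ContinuousLinearMap.fst ℝ F G) hf

lemma PB.snd {f : ℕ → E → F × G} (hf : PB f) : PB (fun L z => (f L z).2) :=
  PB.clm_comp (ContinuousLinearMap.snd ℝ F G) hf

lemma PB.idd : PB (fun (_ : ℕ) (z : E) => z) := PB.clm (ContinuousLinearMap.id ℝ E)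

end PB

/-- The smooth step. -/
lemma PB_smoothTransition : PB (fun _ : ℕ => Real.smoothTransition) := by
  refine ⟨fun _ _ => Real.smoothTransition.contDiff, fun k hk => ?_⟩
  have hc : Continuous (iteratedFDeriv ℝ k Real.smoothTransition) :=
    (Real.smoothTransition.contDiff (n := ⊤)).continuous_iteratedFDeriv (by exact_mod_cast le_top)
  obtain ⟨C, hC⟩ := isCompact_Icc (a := (0:ℝ)) (b := 1) |>.exists_bound_of_continuousOn
    hc.continuousOn
  refine ⟨max C 0, 0, le_max_right _ _, fun L _ z => ?_⟩
  simp only [pow_zero, mul_one]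
  have aux : ∀ (c : ℝ), (∀ᶠ y in 𝓝 z, Real.smoothTransition y = c) →
      iteratedFDeriv ℝ k Real.smoothTransition z = 0 := by
    intro c h
    have h2 : Real.smoothTransition =ᶠ[𝓝 z] fun _ => c := h
    rw [(h2.iteratedFDeriv ℝ k).eq_of_nhds, iteratedFDeriv_const_of_ne (by omega)]; rfl
  by_cases hz : z ∈ Icc (0:ℝ) 1
  · exact (hC z hz).trans (le_max_left _ _)
  · have : iteratedFDeriv ℝ k Real.smoothTransition z = 0 := by
      rcases lt_or_ge z 0 with h0 | h0
      · refine aux 0 ?_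
        filter_upwards [gt_mem_nhds h0] with y hy
        exact Real.smoothTransition.zero_of_nonpos hy.le
      · have h1 : 1 < z := by
          by_contra h; exact hz ⟨h0, not_lt.1 h⟩
        refine aux 1 ?_
        filter_upwards [lt_mem_nhds h1] with y hy
        exact Real.smoothTransition.one_of_one_le hy.le
    rw [this]; simp

/-- Smooth step profile on one period. -/
def gProf (L : ℕ) (y : ℝ) : ℝ := y + 1 / 2 - Real.smoothTransition ((L * y + 1) / 2)

/-- Smoothed sawtooth: equals `y - 1/2` on `[1/L, 1 - 1/L]`, and is `1`-periodic. -/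
def betaR (L : ℕ) (y : ℝ) : ℝ := gProf L (y - round y)

lemma PB_gProf : PB gProf := by
  have h1 : PB (fun (L : ℕ) (y : ℝ) => (L : ℝ) * y) := by
    have := PB.clm_family (fun L : ℕ => (L : ℝ) • ContinuousLinearMap.id ℝ ℝ) 1 1 (by
      intro L _
      rw [norm_smul]
      simp)
    simpa using this
  have h2 : PB (fun (L : ℕ) (y : ℝ) => (2:ℝ)⁻¹ * ((L : ℝ) * y + 1)) :=
    (h1.add (PB.const 1)).const_mul _
  have h3 := (PB.idd (E := ℝ)).add (PB.const (1/2 : ℝ)) |>.sub (PB_smoothTransition.comp h2)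
  have : gProf = fun (L : ℕ) (y : ℝ) => y + 1/2 -
    (Real.smoothTransition ∘ fun y => (2:ℝ)⁻¹ * ((L : ℝ) * y + 1)) y := by
    funext L y
    simp only [gProf, Function.comp]
    congr 2; ring
  rw [this]; exact h3

lemma gProf_right {L : ℕ} {y : ℝ} (h : 1 ≤ L * y) : gProf L y = y - 1 / 2 := by
  rw [gProf, Real.smoothTransition.one_of_one_le (by linarith)]; ring

lemma gProf_left {L : ℕ} {y : ℝ} (h : L * y ≤ -1) : gProf L y = y + 1 / 2 := by
  rw [gProf, Real.smoothTransition.zero_of_nonpos (by linarith)]; ring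

lemma betaR_eq {L : ℕ} (hL : 3 ≤ L) {y : ℝ} (n : ℤ) (h : |y - n| < 2 / 3) :
    betaR L y = gProf L (y - n) := by
  have hL' : (3:ℝ) ≤ L := by exact_mod_cast hL
  have hr := abs_sub_round y
  rw [abs_le] at hr
  rw [abs_lt] at h
  have h1 : ((round y : ℤ) : ℝ) - n < 2 := by linarith [hr.1, hr.2, h.1, h.2]
  have h2 : -2 < ((round y : ℤ) : ℝ) - n := by linarith [hr.1, hr.2, h.1, h.2]
  have h1' : round y - n < 2 := by exact_mod_cast h1
  have h2' : -2 < round y - n := by exact_mod_cast h2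
  rw [betaR]
  have : round y = n - 1 ∨ round y = n ∨ round y = n + 1 := by omega
  rcases this with hh | hh | hh
  · rw [hh] at hr ⊢
    push_cast at hr ⊢
    rw [gProf_right (by nlinarith), gProf_left (by nlinarith)]; ring
  · rw [hh]
  · rw [hh] at hr ⊢
    push_cast at hr ⊢
    rw [gProf_left (by nlinarith), gProf_right (by nlinarith)]; ring

lemma betaR_eventually {L : ℕ} (hL : 3 ≤ L) (y : ℝ) :
    betaR L =ᶠ[𝓝 y] fun w => gProf L (w + (-(round y : ℤ) : ℝ)) := by
  have : Metric.ball y (1/7) ∈ 𝓝 y := Metric.ball_mem_nhds _ (by norm_num)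
  filter_upwards [this] with w hw
  rw [betaR_eq hL (round y) ?_, sub_eq_add_neg]
  have hr := abs_sub_round y
  rw [Metric.mem_ball, Real.dist_eq] at hw
  rw [abs_le] at hr
  rw [abs_lt] at hw ⊢
  constructor <;> linarith [hr.1, hr.2, hw.1, hw.2]

lemma PB_betaR : PB betaR := by
  refine ⟨fun L hL => ?_, fun k hk => ?_⟩
  · rw [contDiff_iff_contDiffAt]
    intro y
    exact (((PB_gProf.1 L hL).comp (contDiff_id.add contDiff_const)).contDiffAt).congr_of_eventuallyEq
      (betaR_eventually hL y)
  · obtain ⟨C, p, hC, h⟩ := PB_gProf.2 k hk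
    refine ⟨C, p, hC, fun L hL z => ?_⟩
    rw [((betaR_eventually hL z).iteratedFDeriv ℝ k).eq_of_nhds, iteratedFDeriv_comp_add_right]
    exact h L hL _

lemma betaR_periodic (L : ℕ) : Function.Periodic (betaR L) 1 := by
  intro y
  simp only [betaR]
  have : round (y + 1) = round y + 1 := by exact_mod_cast round_add_intCast y 1
  rw [this]; push_cast
  congr 1; ring

lemma betaR_abs_le (L : ℕ) (y : ℝ) : |betaR L y| ≤ 1 := by
  have hr := abs_sub_round y
  rw [abs_le] at hr
  rw [betaR, gProf, abs_le]
  have h1 := Real.smoothTransition.le_one ((L * (y - round y) + 1) / 2)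
  have h2 := Real.smoothTransition.nonneg ((L * (y - round y) + 1) / 2)
  constructor <;> linarith [hr.1, hr.2]

lemma betaR_plateau {L : ℕ} (hL : 3 ≤ L) {y : ℝ} (h1 : 1 / (L:ℝ) ≤ y) (h2 : y ≤ 1 - 1 / L) :
    betaR L y = y - 1 / 2 := by
  have hL' : (3:ℝ) ≤ L := by exact_mod_cast hL
  have hL0 : (0:ℝ) < L := by linarith
  rcases le_or_gt y (1/2) with hy | hy
  · rw [betaR_eq hL 0 (by rw [abs_lt]; push_cast; constructor <;> linarith [one_div_pos.2 hL0])]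
    push_cast
    rw [sub_zero, gProf_right]
    rwa [div_le_iff₀' hL0] at h1
  · rw [betaR_eq hL 1 (by rw [abs_lt]; push_cast; constructor <;> linarith [one_div_pos.2 hL0])]
    push_cast
    rw [gProf_left]; · ring
    have : L * (y - 1) ≤ L * (-(1 / L)) := by
      apply mul_le_mul_of_nonneg_left _ hL0.le; linarith
    rw [mul_neg, mul_one_div_cancel hL0.ne'] at this
    exact this

/-- Lipschitz bound, linear in `L`. -/
lemma betaR_lip : ∃ C : ℝ, 1 ≤ C ∧ ∀ L, 3 ≤ L → ∀ x y, |betaR L x - betaR L y| ≤ C * L * |x - y| := by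
  obtain ⟨C, p, hC, h⟩ := PB_smoothTransition.2 1 le_rfl
  have hd : ∀ z, ‖deriv Real.smoothTransition z‖ ≤ C * 3 ^ p := by
    intro z
    have := h 3 le_rfl z
    rw [← norm_iteratedFDeriv_fderiv, norm_iteratedFDeriv_zero, ← norm_deriv_eq_norm_fderiv] at this
    exact_mod_cast this
  refine ⟨1 + C * 3 ^ p, by have : 0 ≤ C * 3 ^ p := by positivity
                            linarith, fun L hL => ?_⟩
  have hL' : (3:ℝ) ≤ L := by exact_mod_cast hL
  have hsmooth := PB_betaR.1 L hL
  have hder : ∀ y, ‖deriv (betaR L) y‖ ≤ (1 + C * 3 ^ p) * L := by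
    intro y
    rw [(betaR_eventually hL y).deriv_eq]
    have hst : Differentiable ℝ Real.smoothTransition :=
      (Real.smoothTransition.contDiff (n := ⊤)).differentiable (by simp)
    have h1 : HasDerivAt (fun w => gProf L (w + (-(round y : ℤ) : ℝ)))
        (1 - deriv Real.smoothTransition ((L * (y + (-(round y : ℤ) : ℝ)) + 1) / 2) * (L / 2)) y := by
      simp only [gProf]
      have hin : HasDerivAt (fun w : ℝ => ((L:ℝ) * (w + (-(round y : ℤ) : ℝ)) + 1) / 2) ((L:ℝ) / 2) y := by
        have := ((((hasDerivAt_id y).add_const (-(round y : ℤ) : ℝ)).const_mul (L:ℝ)).add_const 1).div_const 2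
        simpa using this
      exact (((hasDerivAt_id y).add_const _).add_const _).sub
        ((hst _).hasDerivAt.comp y hin)
    rw [h1.deriv]
    refine (norm_sub_le _ _).trans ?_
    rw [norm_mul, norm_one, Real.norm_of_nonneg (by positivity : (0:ℝ) ≤ L / 2)]
    have h5 := hd (((L:ℝ) * (y + (-(round y : ℤ) : ℝ)) + 1) / 2)
    have h6 : (0:ℝ) ≤ C * 3 ^ p := by positivity
    nlinarith [mul_le_mul_of_nonneg_right h5 (by positivity : (0:ℝ) ≤ L / 2)]
  intro x y
  have := Convex.norm_image_sub_le_of_norm_deriv_le (f := betaR L) (s := univ)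
    (fun z _ => (hsmooth.differentiable (by simp)) z) (fun z _ => hder z) convex_univ
    (mem_univ y) (mem_univ x)
  simpa [Real.norm_eq_abs] using this

end


open MeasureTheory Filter Set
open scoped Topology ENNReal NNReal ContDiff

noncomputable section

lemma PB.diff {V W : Type*} [NormedAddCommGroup V] [NormedSpace ℝ V]
    [NormedAddCommGroup W] [NormedSpace ℝ W] {e : ℕ → V × V → W} (he : PB e) (k : ℕ) :
    ∃ (C : ℝ) (p : ℕ), 0 ≤ C ∧ ∀ L, 3 ≤ L → ∀ v v' z,
      ‖iteratedFDeriv ℝ k (fun z => e L (z, v') - e L (z, v)) z‖ ≤ C * (L : ℝ) ^ p * ‖v' - v‖ := by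
  obtain ⟨C, p, hC, h⟩ := he.2 (k + 1) (by omega)
  refine ⟨C, p, hC, fun L hL v v' z => ?_⟩
  have hsm := he.1 L hL
  have key : ∀ v, iteratedFDeriv ℝ k (fun z => e L (z, v)) z =
      (iteratedFDeriv ℝ k (e L) (z, v)).compContinuousLinearMap
        (fun _ => ContinuousLinearMap.inl ℝ V V) := by
    intro v
    have h1 : (fun z => e L (z, v)) = (fun q => e L (q + ((0:V), v))) ∘ (ContinuousLinearMap.inl ℝ V V) := by
      funext z; simp
    rw [h1, ContinuousLinearMap.iteratedFDeriv_comp_right (n := ∞) _ ?_ _ (by exact_mod_cast le_top),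
      iteratedFDeriv_comp_add_right]
    · simp
    · exact hsm.comp (contDiff_id.add contDiff_const)
  have hsub : iteratedFDeriv ℝ k (fun z => e L (z, v') - e L (z, v)) z
      = iteratedFDeriv ℝ k (fun z => e L (z, v')) z - iteratedFDeriv ℝ k (fun z => e L (z, v)) z := by
    have hc : ∀ v, ContDiffAt ℝ k (fun z => e L (z, v)) z := fun v =>
      ((hsm.comp (contDiff_id.prodMk contDiff_const)).of_le (by exact_mod_cast le_top)).contDiffAt
    exact iteratedFDeriv_sub_apply (hc v') (hc v)
  rw [hsub, key, key]
  have hlin : (iteratedFDeriv ℝ k (e L) (z, v')).compContinuousLinearMap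
        (fun _ => ContinuousLinearMap.inl ℝ V V) - (iteratedFDeriv ℝ k (e L) (z, v)).compContinuousLinearMap
        (fun _ => ContinuousLinearMap.inl ℝ V V) =
      (iteratedFDeriv ℝ k (e L) (z, v') - iteratedFDeriv ℝ k (e L) (z, v)).compContinuousLinearMap
        (fun _ => ContinuousLinearMap.inl ℝ V V) := by
    ext m; simp
  rw [hlin]
  refine (ContinuousMultilinearMap.norm_compContinuousLinearMap_le _ _).trans ?_
  have hp : ∏ _i : Fin k, ‖ContinuousLinearMap.inl ℝ V V‖ ≤ 1 :=
    Finset.prod_le_one (fun _ _ => norm_nonneg _)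
      (fun _ _ => ContinuousLinearMap.norm_inl_le_one ℝ V V)
  have hdiff : Differentiable ℝ (iteratedFDeriv ℝ k (e L)) :=
    hsm.differentiable_iteratedFDeriv (by exact_mod_cast ENat.natCast_lt_top k)
  have hmv := Convex.norm_image_sub_le_of_norm_fderiv_le (𝕜 := ℝ) (f := iteratedFDeriv ℝ k (e L))
    (s := univ) (C := C * (L : ℝ) ^ p) (fun q _ => hdiff q)
    (fun q _ => by rw [norm_fderiv_iteratedFDeriv]; exact h L hL q) convex_univ
    (mem_univ (z, v)) (mem_univ (z, v'))
  have hn : ‖(z, v') - (z, v)‖ = ‖v' - v‖ := by simp [Prod.norm_def]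
  rw [hn] at hmv
  calc _ ≤ ‖iteratedFDeriv ℝ k (e L) (z, v') - iteratedFDeriv ℝ k (e L) (z, v)‖ * 1 := by gcongr
    _ ≤ _ := by rw [mul_one]; exact hmv

/-- Lift of the basic conjugacy. -/
def hLift (N L : ℕ) (p : ℝ × ℝ) : ℝ × ℝ :=
  (p.1 - (N : ℝ)⁻¹ * betaR L p.2, p.2 + N * p.1 - betaR L p.2)

/-- Lift of the inverse of the basic conjugacy. -/
def hLiftInv (N L : ℕ) (p : ℝ × ℝ) : ℝ × ℝ :=
  (p.1 + (N : ℝ)⁻¹ * betaR L (p.2 - N * p.1), p.2 - N * p.1)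

lemma PB_hLift (N : ℕ) : PB (hLift N) := by
  have h1 : PB (fun (_ : ℕ) (p : ℝ × ℝ) => p.1) := PB.idd.fst
  have h2 : PB (fun (_ : ℕ) (p : ℝ × ℝ) => p.2) := PB.idd.snd
  have h3 : PB (fun (L : ℕ) (p : ℝ × ℝ) => betaR L p.2) := PB_betaR.comp h2
  exact (h1.sub (h3.const_mul _)).prodMk ((h2.add (h1.const_mul _)).sub h3)

lemma PB_hLiftInv (N : ℕ) : PB (hLiftInv N) := by
  have h1 : PB (fun (_ : ℕ) (p : ℝ × ℝ) => p.1) := PB.idd.fst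
  have h2 : PB (fun (_ : ℕ) (p : ℝ × ℝ) => p.2) := PB.idd.snd
  have h4 : PB (fun (_ : ℕ) (p : ℝ × ℝ) => p.2 - N * p.1) := h2.sub (h1.const_mul _)
  have h3 : PB (fun (L : ℕ) (p : ℝ × ℝ) => betaR L (p.2 - N * p.1)) := PB_betaR.comp h4
  exact (h1.add (h3.const_mul _)).prodMk h4

/-! ### The basic conjugacy on the torus -/

/-- The sawtooth on the circle. -/
def betaT (L : ℕ) : Torus1 → ℝ := (betaR_periodic L).lift

lemma betaT_coe (L : ℕ) (y : ℝ) : betaT L (y : Torus1) = betaR L y :=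
  (betaR_periodic L).lift_coe y

lemma betaT_abs_le (L : ℕ) (y : Torus1) : |betaT L y| ≤ 1 := by
  induction y using QuotientAddGroup.induction_on with
  | H y => exact betaR_abs_le L y

lemma torus1_norm_coe_le (r : ℝ) : ‖(r : Torus1)‖ ≤ |r| := by
  rw [UnitAddCircle.norm_eq]
  simpa using round_le r 0

lemma torus1_exists_rep (x : Torus1) : ∃ r : ℝ, (r : Torus1) = x ∧ |r| = ‖x‖ := by
  induction x using QuotientAddGroup.induction_on with
  | H y =>
    refine ⟨y - round y, ?_, ?_⟩
    · have : ((round y : ℤ) : ℝ) = (round y : ℤ) • (1:ℝ) := by simp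
      rw [this]
      have h := AddCircle.coe_period (1:ℝ)
      rw [AddCircle.coe_sub, AddCircle.coe_zsmul, h, smul_zero, sub_zero]
    · exact (UnitAddCircle.norm_eq (x := y)).symm

/-- Universal Lipschitz constant of the sawtooth. -/
def cB : ℝ := betaR_lip.choose

lemma cB_one_le : 1 ≤ cB := betaR_lip.choose_spec.1

lemma betaT_lip {L : ℕ} (hL : 3 ≤ L) (x y : Torus1) :
    |betaT L x - betaT L y| ≤ cB * L * ‖x - y‖ := by
  obtain ⟨r, hr, hr'⟩ := torus1_exists_rep (x - y)
  induction y using QuotientAddGroup.induction_on with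
  | H y =>
    have : x = ((y + r : ℝ) : Torus1) := by
      rw [AddCircle.coe_add, hr]
      change x = ((y:ℝ) : Torus1) + (x - ((y:ℝ) : Torus1))
      abel
    rw [← hr', this]
    have h := betaR_lip.choose_spec.2 L hL (y + r) y
    have h2 : betaT L ((y : ℝ) : Torus1) = betaR L y := betaT_coe L y
    rw [betaT_coe]
    have h3 : y + r - y = r := by ring
    rw [h3] at h
    exact h

lemma betaT_continuous {L : ℕ} (hL : 3 ≤ L) : Continuous (betaT L) := by
  refine continuous_quot_lift _ ?_
  exact (PB_betaR.1 L hL).continuous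

lemma coe_nat_mul (N : ℕ) (r : ℝ) : (((N : ℝ) * r : ℝ) : Torus1) = N • (r : Torus1) := by
  rw [← nsmul_eq_mul, AddCircle.coe_nsmul]

lemma coe_inv_mul (N : ℕ) (hN : 0 < N) (r : ℝ) :
    N • ((((N : ℝ)⁻¹ * r : ℝ)) : Torus1) = (r : Torus1) := by
  rw [← coe_nat_mul, mul_inv_cancel_left₀]
  positivity

/-- The basic conjugacy on the torus. -/
def hT (N L : ℕ) (hN : 0 < N) (hL : 3 ≤ L) : Torus2 ≃ₜ Torus2 where
  toFun p := (p.1 - (((N : ℝ)⁻¹ * betaT L p.2 : ℝ) : Torus1), p.2 + N • p.1 - ((betaT L p.2 : ℝ) : Torus1))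
  invFun p := (p.1 + (((N : ℝ)⁻¹ * betaT L (p.2 - N • p.1) : ℝ) : Torus1), p.2 - N • p.1)
  left_inv p := by
    have : p.2 + N • p.1 - ((betaT L p.2 : ℝ) : Torus1) -
        N • (p.1 - (((N : ℝ)⁻¹ * betaT L p.2 : ℝ) : Torus1)) = p.2 := by
      rw [smul_sub, coe_inv_mul N hN]; abel
    simp only [this]
    ext <;> simp
  right_inv p := by
    ext
    · simp
    · simp only [smul_add, coe_inv_mul N hN]; abel
  continuous_toFun := by
    have h1 : Continuous fun p : Torus2 => betaT L p.2 := (betaT_continuous hL).comp continuous_snd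
    have h2 : Continuous fun p : Torus2 => ((betaT L p.2 : ℝ) : Torus1) :=
      (AddCircle.continuous_mk' 1).comp h1
    have h3 : Continuous fun p : Torus2 => (((N : ℝ)⁻¹ * betaT L p.2 : ℝ) : Torus1) :=
      (AddCircle.continuous_mk' 1).comp (continuous_const.mul h1)
    fun_prop
  continuous_invFun := by
    have h0 : Continuous fun p : Torus2 => p.2 - N • p.1 := by fun_prop
    have h1 : Continuous fun p : Torus2 => betaT L (p.2 - N • p.1) := (betaT_continuous hL).comp h0
    have h3 : Continuous fun p : Torus2 => (((N : ℝ)⁻¹ * betaT L (p.2 - N • p.1) : ℝ) : Torus1) :=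
      (AddCircle.continuous_mk' 1).comp (continuous_const.mul h1)
    fun_prop

section hT
variable {N L : ℕ} {hN : 0 < N} {hL : 3 ≤ L}

lemma hT_apply (p : Torus2) : hT N L hN hL p =
    (p.1 - (((N : ℝ)⁻¹ * betaT L p.2 : ℝ) : Torus1), p.2 + N • p.1 - ((betaT L p.2 : ℝ) : Torus1)) := rfl

lemma hT_symm_apply (p : Torus2) : (hT N L hN hL).symm p =
    (p.1 + (((N : ℝ)⁻¹ * betaT L (p.2 - N • p.1) : ℝ) : Torus1), p.2 - N • p.1) := rfl

lemma hT_lift (p : ℝ × ℝ) : torusProj (hLift N L p) = hT N L hN hL (torusProj p) := by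
  rw [hT_apply]
  simp only [torusProj, hLift, betaT_coe]
  ext
  · simp
  · simp only [AddCircle.coe_sub, AddCircle.coe_add, coe_nat_mul]

lemma hT_symm_lift (p : ℝ × ℝ) :
    torusProj (hLiftInv N L p) = (hT N L hN hL).symm (torusProj p) := by
  rw [hT_symm_apply]
  have : ((p.2 - N * p.1 : ℝ) : Torus1) = (p.2 : Torus1) - N • (p.1 : Torus1) := by
    rw [AddCircle.coe_sub, coe_nat_mul]
  simp only [torusProj, hLiftInv, ← this, betaT_coe]
  simp

lemma hT_add_x (u : Torus2) (t : Torus1) :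
    hT N L hN hL (u + (t, 0)) = hT N L hN hL u + (t, N • t) := by
  simp only [hT_apply, Prod.fst_add, Prod.snd_add, add_zero, Prod.mk_add_mk, smul_add]
  ext
  · simp only; abel
  · simp only; abel

lemma nsmul_norm_le (N : ℕ) (t : Torus1) : ‖N • t‖ ≤ N * ‖t‖ := norm_nsmul_le

/-- Main displacement bound: Lipschitz constant `2N` in `x` and `3 cB L` in `y`. -/
lemma hT_dist (u v : Torus2) : dist (hT N L hN hL u) (hT N L hN hL v) ≤
    2 * N * ‖u.1 - v.1‖ + 2 * cB * L * ‖u.2 - v.2‖ := by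
  have hN1 : (1:ℝ) ≤ N := by exact_mod_cast hN
  have hL1 : (3:ℝ) ≤ L := by exact_mod_cast hL
  have hc := cB_one_le
  have hb := betaT_lip hL u.2 v.2
  have hcL : 1 ≤ cB * L := by nlinarith
  have n1 := norm_nonneg (u.1 - v.1)
  have n2 := norm_nonneg (u.2 - v.2)
  rw [Prod.dist_eq]
  refine max_le ?_ ?_
  · rw [dist_eq_norm]
    have : (hT N L hN hL u).1 - (hT N L hN hL v).1 = (u.1 - v.1) -
        (((N : ℝ)⁻¹ * (betaT L u.2 - betaT L v.2) : ℝ) : Torus1) := by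
      simp only [hT_apply, mul_sub, AddCircle.coe_sub]; abel
    rw [this]
    refine (norm_sub_le _ _).trans ?_
    have h1 := torus1_norm_coe_le ((N : ℝ)⁻¹ * (betaT L u.2 - betaT L v.2))
    have h2 : |(N : ℝ)⁻¹ * (betaT L u.2 - betaT L v.2)| ≤ |betaT L u.2 - betaT L v.2| := by
      rw [abs_mul, abs_of_nonneg (by positivity : (0:ℝ) ≤ (N:ℝ)⁻¹)]
      exact mul_le_of_le_one_left (abs_nonneg _) (inv_le_one_of_one_le₀ hN1)
    nlinarith
  · rw [dist_eq_norm]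
    have : (hT N L hN hL u).2 - (hT N L hN hL v).2 = (u.2 - v.2) + N • (u.1 - v.1) -
        (((betaT L u.2 - betaT L v.2) : ℝ) : Torus1) := by
      simp only [hT_apply, smul_sub, AddCircle.coe_sub]; abel
    rw [this]
    refine (norm_sub_le _ _).trans ?_
    have h0 := norm_add_le (u.2 - v.2) (N • (u.1 - v.1))
    have h1 := torus1_norm_coe_le (betaT L u.2 - betaT L v.2)
    have h3 := nsmul_norm_le N (u.1 - v.1)
    nlinarith

lemma hT_mp : MeasurePreserving (hT N L hN hL) volume volume := by
  have hb : Measurable (betaT L) := (betaT_continuous hL).measurable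
  -- first shear
  have hX : MeasurePreserving (fun p : Torus2 => (p.1 - (((N : ℝ)⁻¹ * betaT L p.2 : ℝ) : Torus1), p.2))
      volume volume := by
    have h1 : MeasurePreserving (fun p : Torus2 => (p.1, p.2 - (((N : ℝ)⁻¹ * betaT L p.1 : ℝ) : Torus1)))
        (volume.prod volume) (volume.prod volume) := by
      refine MeasurePreserving.skew_product (MeasurePreserving.id volume)
        (g := fun y x : Torus1 => x - (((N : ℝ)⁻¹ * betaT L y : ℝ) : Torus1)) ?_ ?_
      · have : Continuous (fun p : Torus1 × Torus1 => p.2 - (((N : ℝ)⁻¹ * betaT L p.1 : ℝ) : Torus1)) := by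
          have h1 : Continuous fun p : Torus2 => betaT L p.1 := (betaT_continuous hL).comp continuous_fst
          have h3 : Continuous fun p : Torus2 => (((N : ℝ)⁻¹ * betaT L p.1 : ℝ) : Torus1) :=
            (AddCircle.continuous_mk' 1).comp (continuous_const.mul h1)
          fun_prop
        exact this.measurable
      · refine Filter.Eventually.of_forall fun y => ?_
        exact (measurePreserving_sub_right volume _).map_eq
    have h2 : MeasurePreserving (Prod.swap : Torus2 → Torus2) (volume.prod volume) (volume.prod volume) :=
      Measure.measurePreserving_swap
    exact (h2.comp h1).comp h2
  have hY : MeasurePreserving (fun p : Torus2 => (p.1, p.2 + N • p.1)) volume volume := by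
    refine MeasurePreserving.skew_product (MeasurePreserving.id volume)
        (g := fun x y : Torus1 => y + N • x) ?_ ?_
    · have : Continuous (fun p : Torus1 × Torus1 => p.2 + N • p.1) := by fun_prop
      exact this.measurable
    · refine Filter.Eventually.of_forall fun y => ?_
      exact (measurePreserving_add_right volume _).map_eq
  have := hY.comp hX
  convert this using 1
  funext p
  rw [hT_apply]
  simp only [Function.comp, smul_sub, coe_inv_mul N hN]
  ext
  · rfl
  · simp only; abel

/-- On the plateau. -/
lemma betaT_plateau (hL : 3 ≤ L) {y : Torus1} (hy : 1 / (L:ℝ) ≤ ‖y‖) :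
    y - ((betaT L y : ℝ) : Torus1) = ((1/2 : ℝ) : Torus1) := by
  induction y using QuotientAddGroup.induction_on with
  | H y =>
    have e0 : ((Int.fract y : ℝ) : Torus1) = ((y : ℝ) : Torus1) := by
      have : y = Int.fract y + (⌊y⌋ : ℤ) • (1:ℝ) := by
        simp
      conv_rhs => rw [this]
      rw [AddCircle.coe_add, AddCircle.coe_zsmul, AddCircle.coe_period]; simp
    change ((y:ℝ) : Torus1) - ((betaT L ((y:ℝ) : Torus1) : ℝ) : Torus1) = _
    have hy' : 1 / (L:ℝ) ≤ ‖((y:ℝ) : Torus1)‖ := hy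
    rw [← e0] at hy' ⊢
    have f0 := Int.fract_nonneg y
    have f1 := (Int.fract_lt_one y).le
    have a1 : 1 / (L:ℝ) ≤ Int.fract y := by
      refine (hy'.trans (torus1_norm_coe_le _)).trans (le_of_eq (abs_of_nonneg f0))
    have a2 : 1 / (L:ℝ) ≤ 1 - Int.fract y := by
      have : ((Int.fract y : ℝ) : Torus1) = ((Int.fract y - 1 : ℝ) : Torus1) := by
        rw [AddCircle.coe_sub, AddCircle.coe_period, sub_zero]
      rw [this] at hy'
      refine (hy'.trans (torus1_norm_coe_le _)).trans (le_of_eq ?_)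
      rw [abs_sub_comm, abs_of_nonneg (by linarith)]
    rw [betaT_coe, betaR_plateau hL a1 (by linarith), ← AddCircle.coe_sub]
    congr 1; ring

end hT
end


open MeasureTheory Filter Set
open scoped Topology ENNReal NNReal ContDiff

noncomputable section

/-! ### Stages of the construction -/

/-- Data at a given stage of the Anosov–Katok construction. -/
structure Stage where
  a : ℕ
  b : ℕ
  H : Torus2 ≃ₜ Torus2
  HL : ℝ × ℝ → ℝ × ℝ
  HI : ℝ × ℝ → ℝ × ℝ
  K : ℝ
  Lx : ℝ
  pbHL : PB (fun _ => HL)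
  pbHI : PB (fun _ => HI)
  liftH : ∀ p, torusProj (HL p) = H (torusProj p)
  liftI : ∀ p, torusProj (HI p) = H.symm (torusProj p)
  K1 : 1 ≤ K
  Lx0 : 0 ≤ Lx
  lipK : ∀ u v, dist (H u) (H v) ≤ K * dist u v
  lipX : ∀ u (s : Torus1), dist (H (u + (s, 0))) (H u) ≤ Lx * ‖s‖
  mp : MeasurePreserving H volume volume

/-- The next stage. -/
def Stage.step (S : Stage) (L : ℕ) (hL : 3 ≤ L) : Stage where
  a := S.b
  b := L
  H := (hT (2 ^ S.a) L (by positivity) hL).trans S.H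
  HL := S.HL ∘ hLift (2 ^ S.a) L
  HI := hLiftInv (2 ^ S.a) L ∘ S.HI
  K := S.K * (2 * 2 ^ S.a + 2 * cB * L)
  Lx := S.K * 2 ^ S.a
  pbHL := by
    have h : PB (fun _ : ℕ => hLift (2 ^ S.a) L) := by
      refine ⟨fun _ _ => (PB_hLift _).1 L hL, fun k hk => ?_⟩
      obtain ⟨C, p, hC, h⟩ := (PB_hLift (2 ^ S.a)).2 k hk
      exact ⟨C * (L : ℝ) ^ p, 0, by positivity, fun _ _ z => by simpa using h L hL z⟩
    exact S.pbHL.comp h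
  pbHI := by
    have h : PB (fun _ : ℕ => hLiftInv (2 ^ S.a) L) := by
      refine ⟨fun _ _ => (PB_hLiftInv _).1 L hL, fun k hk => ?_⟩
      obtain ⟨C, p, hC, h⟩ := (PB_hLiftInv (2 ^ S.a)).2 k hk
      exact ⟨C * (L : ℝ) ^ p, 0, by positivity, fun _ _ z => by simpa using h L hL z⟩
    exact h.comp S.pbHI
  liftH p := by
    simp only [Function.comp, Homeomorph.trans_apply]
    rw [S.liftH, hT_lift]
  liftI p := by
    simp only [Function.comp, Homeomorph.symm_trans_apply]
    rw [hT_symm_lift, S.liftI]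
  K1 := by
    have h1 := S.K1
    have h2 := cB_one_le
    have h3 : (3:ℝ) ≤ L := by exact_mod_cast hL
    have h4 : (0:ℝ) < 2 ^ S.a := by positivity
    nlinarith [mul_le_mul h2 h3 (by norm_num) (by linarith)]
  Lx0 := mul_nonneg (zero_le_one.trans S.K1) (by positivity)
  lipK u v := by
    simp only [Homeomorph.trans_apply]
    refine (S.lipK _ _).trans ?_
    rw [mul_assoc]
    refine mul_le_mul_of_nonneg_left ?_ (zero_le_one.trans S.K1)
    refine hT_dist u v |>.trans ?_
    have h2 := cB_one_le
    have e1 : ‖u.1 - v.1‖ ≤ dist u v := by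
      rw [← dist_eq_norm, Prod.dist_eq]; exact le_max_left _ _
    have e2 : ‖u.2 - v.2‖ ≤ dist u v := by
      rw [← dist_eq_norm, Prod.dist_eq]; exact le_max_right _ _
    push_cast
    rw [add_mul]
    gcongr
  lipX u s := by
    simp only [Homeomorph.trans_apply]
    rw [hT_add_x]
    refine (S.lipK _ _).trans ?_
    rw [mul_assoc]
    refine mul_le_mul_of_nonneg_left ?_ (zero_le_one.trans S.K1)
    rw [dist_eq_norm, add_sub_cancel_left, Prod.norm_def]
    have h1 : (1:ℝ) ≤ 2 ^ S.a := one_le_pow₀ (by norm_num)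
    refine max_le ?_ ?_
    · exact le_mul_of_one_le_left (norm_nonneg _) h1
    · have := nsmul_norm_le (2 ^ S.a) s
      push_cast at this
      exact this
  mp := S.mp.comp hT_mp

/-- Smallness of the perturbation in `C^{n-1}`. -/
def SmoothOK (n : ℕ) (S : Stage) : Prop :=
  ∀ (t σ : ℝ), |σ| ≤ 1 → ∀ k, k < n → ∀ z,
    ‖iteratedFDeriv ℝ k (fun z => S.HL (S.HI z + (t + σ * (1 / 2 ^ S.b), σ * (2 ^ S.a / 2 ^ S.b)))
      - S.HL (S.HI z + (t, 0))) z‖ ≤ (1 / 2) ^ n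

/-- Requirements on stage `n`. -/
def Good (n : ℕ) (S : Stage) : Prop :=
  S.a < S.b ∧ (S.K * (2 ^ S.a) ^ 2 * 2 ^ (n + 5)) ^ 2 ≤ 2 ^ S.b ∧ SmoothOK n S

lemma poly_le_exp (C : ℝ) (p : ℕ) : ∀ᶠ L : ℕ in atTop, C * (L : ℝ) ^ p ≤ 2 ^ L := by
  have h := (tendsto_pow_const_mul_const_pow_of_abs_lt_one p (r := (1/2 : ℝ))
    (by rw [abs_of_pos] <;> norm_num)).const_mul C
  rw [mul_zero] at h
  filter_upwards [h.eventually_le_const zero_lt_one] with L hL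
  have h2 : (0:ℝ) < 2 ^ L := by positivity
  rw [div_pow, one_pow] at hL
  calc C * (L:ℝ) ^ p = (C * ((L:ℝ) ^ p * (1 / 2 ^ L))) * 2 ^ L := by field_simp
    _ ≤ 1 * 2 ^ L := by gcongr
    _ = _ := one_mul _

lemma exists_step (n : ℕ) (S : Stage) : ∃ (L : ℕ) (hL : 3 ≤ L), Good (n + 1) (S.step L hL) ∧
    2 ^ n ≤ L ∧ (S.K ^ 2 * 2 ^ S.a) ^ n ≤ L := by
  have hK := S.K1
  have hcB := cB_one_le
  -- the joint map
  have hE : PB (fun (L : ℕ) (q : (ℝ × ℝ) × (ℝ × ℝ)) =>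
      S.HL (hLift (2 ^ S.a) L (hLiftInv (2 ^ S.a) L (S.HI q.1) + q.2))) := by
    have h1 : PB (fun (L : ℕ) (q : (ℝ × ℝ) × (ℝ × ℝ)) => hLiftInv (2 ^ S.a) L (S.HI q.1)) :=
      (PB_hLiftInv _).comp (S.pbHI.comp PB.idd.fst)
    exact S.pbHL.comp ((PB_hLift _).comp (h1.add PB.idd.snd))
  have hs : ∀ k ∈ Finset.range (n + 1), ∀ᶠ L : ℕ in atTop, 3 ≤ L → ∀ (t σ : ℝ), |σ| ≤ 1 → ∀ z,
    ‖iteratedFDeriv ℝ k (fun z =>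
      S.HL (hLift (2 ^ S.a) L (hLiftInv (2 ^ S.a) L (S.HI z) + (t + σ * (1 / 2 ^ L), σ * (2 ^ S.b / 2 ^ L))))
      - S.HL (hLift (2 ^ S.a) L (hLiftInv (2 ^ S.a) L (S.HI z) + (t, 0)))) z‖ ≤ (1 / 2) ^ (n + 1) := by
    intro k _
    obtain ⟨C, p, hC, h⟩ := hE.diff k
    filter_upwards [poly_le_exp (C * 2 ^ S.b * 2 ^ (n + 1)) p] with L hL hL3 t σ hσ z
    refine (h L hL3 (t, 0) (t + σ * (1 / 2 ^ L), σ * (2 ^ S.b / 2 ^ L)) z).trans ?_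
    have hn : ‖((t + σ * (1 / 2 ^ L), σ * (2 ^ S.b / 2 ^ L)) : ℝ × ℝ) - (t, 0)‖ ≤ 2 ^ S.b / 2 ^ L := by
      have h1 : (1:ℝ) ≤ 2 ^ S.b := one_le_pow₀ (by norm_num)
      have h2 : (0:ℝ) < 2 ^ L := by positivity
      simp only [Prod.mk_sub_mk, add_sub_cancel_left, sub_zero, Prod.norm_def, Real.norm_eq_abs, abs_mul]
      rw [abs_of_pos (by positivity : (0:ℝ) < 1 / 2 ^ L), abs_of_pos (by positivity : (0:ℝ) < 2 ^ S.b / 2 ^ L)]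
      refine max_le ?_ (mul_le_of_le_one_left (by positivity) hσ)
      refine (mul_le_of_le_one_left (by positivity) hσ).trans ?_
      gcongr
    calc C * (L:ℝ) ^ p * _ ≤ C * (L:ℝ) ^ p * (2 ^ S.b / 2 ^ L) := by gcongr
      _ = (C * 2 ^ S.b * 2 ^ (n + 1) * (L:ℝ) ^ p) / 2 ^ L * (1 / 2) ^ (n + 1) := by
          rw [div_pow, one_pow]; field_simp
      _ ≤ 1 * (1 / 2) ^ (n + 1) := by
          gcongr
          rw [div_le_one (by positivity)]
          exact hL
      _ = _ := one_mul _
  have hs' := (Filter.eventually_all_finset (Finset.range (n + 1))).2 hs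
  have hg : ∀ᶠ L : ℕ in atTop, ((S.K * (2 * 2 ^ S.a + 2 * cB)) * (2 ^ S.b) ^ 2 * 2 ^ (n + 1 + 5)) ^ 2
      * (L:ℝ) ^ 2 ≤ 2 ^ L := poly_le_exp _ 2
  have hl : ∀ᶠ L : ℕ in atTop, (S.K ^ 2 * 2 ^ S.a) ^ n ≤ (L : ℝ) :=
    tendsto_natCast_atTop_atTop.eventually_ge_atTop _
  obtain ⟨L, h1, h2, h3, h4, h5, h6⟩ := (hs'.and (hg.and (hl.and ((eventually_ge_atTop 3).and
    ((eventually_ge_atTop (2 ^ n)).and (eventually_gt_atTop S.b)))))).exists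
  refine ⟨L, h4, ⟨h6, ?_, ?_⟩, h5, h3⟩
  · refine le_trans ?_ h2
    rw [← mul_pow]
    have hL1 : (1:ℝ) ≤ L := by exact_mod_cast (by omega : 1 ≤ L)
    have h7 : (0:ℝ) < 2 ^ S.a := by positivity
    refine pow_le_pow_left₀ ?_ ?_ 2
    · have h8 : 0 ≤ (S.step L h4).K := zero_le_one.trans (S.step L h4).K1
      exact mul_nonneg (mul_nonneg h8 (by positivity)) (by positivity)
    · change S.K * (2 * 2 ^ S.a + 2 * cB * L) * (2 ^ S.b) ^ 2 * 2 ^ (n + 1 + 5) ≤ _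
      have : S.K * (2 * 2 ^ S.a + 2 * cB * L) ≤ S.K * (2 * 2 ^ S.a + 2 * cB) * L := by
        rw [mul_assoc S.K]
        refine mul_le_mul_of_nonneg_left ?_ (by linarith)
        nlinarith
      calc _ ≤ S.K * (2 * 2 ^ S.a + 2 * cB) * L * (2 ^ S.b) ^ 2 * 2 ^ (n + 1 + 5) := by gcongr
        _ = _ := by ring
  · intro t σ hσ k hk z
    exact h1 k (Finset.mem_range.2 hk) h4 t σ hσ z

/-- The initial stage. -/
def stage0 : Stage where
  a := 10
  b := 60
  H := Homeomorph.refl _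
  HL := id
  HI := id
  K := 1
  Lx := 1
  pbHL := PB.idd
  pbHI := PB.idd
  liftH _ := rfl
  liftI _ := rfl
  K1 := le_rfl
  Lx0 := zero_le_one
  lipK u v := by simp
  lipX u s := by simp [dist_eq_norm, Prod.norm_def]
  mp := MeasurePreserving.id _

/-- The chosen parameter at step `n`. -/
def chooseL (n : ℕ) (S : Stage) : ℕ := (exists_step n S).choose

lemma chooseL_spec (n : ℕ) (S : Stage) : ∃ hL : 3 ≤ chooseL n S,
    Good (n + 1) (S.step (chooseL n S) hL) ∧
    2 ^ n ≤ chooseL n S ∧ (S.K ^ 2 * 2 ^ S.a) ^ n ≤ chooseL n S :=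
  (exists_step n S).choose_spec

/-- The sequence of stages. -/
def stg : ℕ → Stage
  | 0 => stage0
  | n + 1 => (stg n).step (chooseL n (stg n)) (chooseL_spec n (stg n)).choose

lemma stg_good (n : ℕ) : Good n (stg n) := by
  cases n with
  | zero =>
    refine ⟨by change 10 < 60; norm_num, ?_, fun _ _ _ k hk => by omega⟩
    change ((1:ℝ) * (2 ^ 10) ^ 2 * 2 ^ (0 + 5)) ^ 2 ≤ 2 ^ 60
    norm_num
  | succ n => exact (chooseL_spec n (stg n)).choose_spec.1

/-- `L_n`. -/
def LL (n : ℕ) : ℕ := chooseL n (stg n)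
/-- `N_n`. -/
def NN (n : ℕ) : ℕ := 2 ^ (stg n).a
/-- Lipschitz constant of `H_n`. -/
def KK (n : ℕ) : ℝ := (stg n).K
/-- Lipschitz constant of `H_n` in the first variable. -/
def LX (n : ℕ) : ℝ := (stg n).Lx
/-- The conjugacy `H_n`. -/
def HH (n : ℕ) : Torus2 ≃ₜ Torus2 := (stg n).H

lemma LL_ge (n : ℕ) : 3 ≤ LL n := (chooseL_spec n (stg n)).choose
lemma LL_pow (n : ℕ) : 2 ^ n ≤ LL n := (chooseL_spec n (stg n)).choose_spec.2.1
lemma LL_big (n : ℕ) : (KK n ^ 2 * NN n) ^ n ≤ LL n := by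
  have := (chooseL_spec n (stg n)).choose_spec.2.2
  simpa [NN, KK, LL] using this
lemma NN_pos (n : ℕ) : 0 < NN n := by unfold NN; positivity
lemma NNr_pos (n : ℕ) : (0:ℝ) < NN n := by exact_mod_cast NN_pos n
lemma NN_one_le (n : ℕ) : (1:ℝ) ≤ NN n := by exact_mod_cast NN_pos n
lemma NN_succ (n : ℕ) : NN (n + 1) = 2 ^ (stg n).b := rfl
lemma NN_succ2 (n : ℕ) : NN (n + 2) = 2 ^ (LL n) := rfl
lemma KK_one_le (n : ℕ) : 1 ≤ KK n := (stg n).K1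

/-- The `n`-th elementary conjugacy. -/
def hh (n : ℕ) : Torus2 ≃ₜ Torus2 := hT (NN n) (LL n) (NN_pos n) (LL_ge n)

lemma HH_succ (n : ℕ) (u : Torus2) : HH (n + 1) u = HH n (hh n u) := rfl
lemma HH_symm_succ (n : ℕ) (u : Torus2) : (HH (n + 1)).symm u = (hh n).symm ((HH n).symm u) := rfl
lemma HH_zero (u : Torus2) : HH 0 u = u := rfl
lemma LX_succ (n : ℕ) : LX (n + 1) = KK n * NN n := by
  change (stg n).K * 2 ^ (stg n).a = _
  simp [KK, NN]
lemma LX_zero : LX 0 = 1 := rfl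
lemma NN_zero : NN 0 = 2 ^ 10 := rfl
lemma HH_lip (n : ℕ) (u v : Torus2) : dist (HH n u) (HH n v) ≤ KK n * dist u v := (stg n).lipK u v
lemma HH_lipX (n : ℕ) (u : Torus2) (s : Torus1) : dist (HH n (u + (s, 0))) (HH n u) ≤ LX n * ‖s‖ :=
  (stg n).lipX u s
lemma HH_mp (n : ℕ) : MeasurePreserving (HH n) volume volume := (stg n).mp
lemma LX_nonneg (n : ℕ) : 0 ≤ LX n := (stg n).Lx0

/-- Error term `e_n = K_n N_n / N_{n+1}`. -/
def ee (n : ℕ) : ℝ := KK n * NN n / NN (n + 1)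

lemma ee_nonneg (n : ℕ) : 0 ≤ ee n := by
  have := KK_one_le n
  unfold ee
  have : 0 ≤ KK n := by linarith
  positivity

lemma NN_dvd_lt (n : ℕ) : ∃ d, 1 ≤ d ∧ NN (n + 1) = NN n * 2 ^ d := by
  have h := (stg_good n).1
  refine ⟨(stg n).b - (stg n).a, by omega, ?_⟩
  rw [NN_succ, NN, ← pow_add]; congr 1; omega

lemma NN_double (n : ℕ) : 2 * NN n ≤ NN (n + 1) := by
  obtain ⟨d, hd, h⟩ := NN_dvd_lt n
  rw [h, mul_comm]
  exact Nat.mul_le_mul_left _ (Nat.le_self_pow (by omega) 2)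

lemma NN_mono : Monotone NN := monotone_nat_of_le_succ fun n => by have := NN_double n; omega

lemma ee_sq (n : ℕ) : KK n * NN n ^ 2 * 2 ^ (n + 5) ≤ √(NN (n + 1)) := by
  apply Real.le_sqrt_of_sq_le
  have := (stg_good n).2.1
  rw [NN_succ, KK, NN]
  push_cast
  exact this

lemma ee_le_sqrt (n : ℕ) : ee n ≤ (1 / 2) ^ (n + 5) / (NN n * √(NN (n + 1))) := by
  have h := ee_sq n
  have h0 : 0 < √(NN (n + 1) : ℝ) := Real.sqrt_pos.2 (NNr_pos _)
  have h1 := NNr_pos n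
  have h2 : (NN (n + 1) : ℝ) = √(NN (n + 1)) * √(NN (n + 1)) :=
    (Real.mul_self_sqrt (NNr_pos _).le).symm
  rw [ee, h2, div_le_div_iff₀ (by positivity) (by rw [← h2]; positivity), div_pow, one_pow]
  rw [← h2]
  have h3 : KK n * NN n * (NN n * √(NN (n+1) : ℝ)) = (KK n * NN n ^ 2 * 2 ^ (n + 5)) * √(NN (n+1) : ℝ) * (1 / 2 ^ (n+5)) := by
    field_simp
  rw [h3]
  calc _ ≤ √(NN (n+1) : ℝ) * √(NN (n+1) : ℝ) * (1 / 2 ^ (n+5)) := by gcongr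
    _ = _ := by rw [← h2]; ring

lemma ee_le_a (n : ℕ) : ee n ≤ (1 / 2) ^ (n + 5) / √(NN (n + 1)) := by
  refine (ee_le_sqrt n).trans ?_
  have h0 : 0 < √(NN (n + 1) : ℝ) := Real.sqrt_pos.2 (NNr_pos _)
  gcongr
  exact le_mul_of_one_le_left h0.le (NN_one_le n)

lemma ee_le_b (n : ℕ) : ee n ≤ (1 / 2) ^ (n + 5) / NN n := by
  refine (ee_le_sqrt n).trans ?_
  have h0 : 1 ≤ √(NN (n + 1) : ℝ) := Real.one_le_sqrt.2 (NN_one_le _)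
  have := NNr_pos n
  gcongr
  exact le_mul_of_one_le_right this.le h0

lemma ee_le (n : ℕ) : ee n ≤ (1 / 2) ^ (n + 5) := by
  refine (ee_le_b n).trans (div_le_self (by positivity) (NN_one_le n))

lemma LX_div_le (n : ℕ) : LX n / NN n ≤ (1 / 2) ^ (n + 4) := by
  cases n with
  | zero => rw [LX_zero, NN_zero]; norm_num
  | succ n =>
    rw [LX_succ]
    exact ee_le n

/-! ### The rotation numbers -/

/-- The approximating rotation numbers. -/
def alf (n : ℕ) : ℝ := ∑ k ∈ Finset.range (n + 1), 1 / (NN k : ℝ)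

lemma alf_succ (n : ℕ) : alf (n + 1) = alf n + 1 / NN (n + 1) := by
  rw [alf, Finset.sum_range_succ]; rfl

lemma alf_num (n : ℕ) : ∃ p : ℕ, Odd p ∧ (NN n : ℝ) * alf n = p := by
  induction n with
  | zero =>
    refine ⟨1, odd_one, ?_⟩
    have := (NNr_pos 0).ne'
    simp [alf, this]
  | succ n ih =>
    obtain ⟨p, hp, h⟩ := ih
    obtain ⟨d, hd, h2⟩ := NN_dvd_lt n
    refine ⟨2 ^ d * p + 1, ?_, ?_⟩
    · refine Even.add_one (Even.mul_right ?_ _)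
      exact (Nat.even_pow.2 ⟨even_two, by omega⟩)
    · rw [alf_succ, mul_add, mul_one_div_cancel (NNr_pos _).ne', h2]
      push_cast
      rw [← h]; ring

end


open MeasureTheory Filter Set
open scoped Topology ENNReal NNReal ContDiff

noncomputable section

instance instProbTorus1 : IsProbabilityMeasure (volume : Measure Torus1) :=
  ⟨by rw [AddCircle.measure_univ]; simp⟩

instance instProbTorus2 : IsProbabilityMeasure (volume : Measure Torus2) :=
  inferInstanceAs (IsProbabilityMeasure ((volume : Measure Torus1).prod (volume : Measure Torus1)))

instance instInvTorus2 : (volume : Measure Torus2).IsAddRightInvariant :=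
  inferInstanceAs (((volume : Measure Torus1).prod (volume : Measure Torus1)).IsAddRightInvariant)

/-! ### The approximating maps and their limit -/

/-- The `i`-th iterate of the `n`-th approximation. -/
def Ti (n : ℕ) (i : ℤ) (z : Torus2) : Torus2 :=
  HH n ((HH n).symm z + (((i * alf n : ℝ) : Torus1), 0))

lemma flow_succ (n : ℕ) (t : Torus1) (z : Torus2) :
    HH (n + 1) ((HH (n + 1)).symm z + (t, 0)) = HH n ((HH n).symm z + (t, NN n • t)) := by
  rw [HH_succ, HH_symm_succ, hh, hT_add_x, Homeomorph.apply_symm_apply]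

lemma coe_int (k : ℤ) : (((k : ℤ) : ℝ) : Torus1) = 0 := by
  have : ((k : ℤ) : ℝ) = k • (1:ℝ) := by simp
  rw [this, AddCircle.coe_zsmul, AddCircle.coe_period, smul_zero]

lemma nsmul_alf (n : ℕ) (i : ℤ) : NN n • ((i * alf n : ℝ) : Torus1) = 0 := by
  obtain ⟨p, _, hp⟩ := alf_num n
  rw [← coe_nat_mul, mul_left_comm, hp]
  have := coe_int (i * p)
  push_cast at this
  exact this

lemma nsmul_alf_succ (n : ℕ) (i : ℤ) : NN n • ((i * alf (n + 1) : ℝ) : Torus1) =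
    ((i * (NN n / NN (n + 1)) : ℝ) : Torus1) := by
  rw [alf_succ, mul_add, AddCircle.coe_add, smul_add, nsmul_alf, zero_add, ← coe_nat_mul]
  congr 1; ring

lemma Ti_succ_eq (n : ℕ) (i : ℤ) (z : Torus2) : Ti (n + 1) i z =
    HH n ((HH n).symm z + (((i * alf (n + 1) : ℝ) : Torus1), ((i * (NN n / NN (n + 1)) : ℝ) : Torus1))) := by
  rw [Ti, flow_succ, nsmul_alf_succ]

lemma Ti_add (n : ℕ) (i j : ℤ) (z : Torus2) : Ti n (i + j) z = Ti n i (Ti n j z) := by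
  simp only [Ti, Homeomorph.symm_apply_apply]
  congr 1
  ext
  · simp only [Prod.fst_add]; push_cast; rw [add_mul, AddCircle.coe_add]; abel
  · simp

lemma Ti_zero (n : ℕ) (z : Torus2) : Ti n 0 z = z := by
  simp only [Ti, Int.cast_zero, zero_mul, AddCircle.coe_zero]
  have : ((0 : Torus1), (0 : Torus1)) = 0 := rfl
  rw [this, add_zero, Homeomorph.apply_symm_apply]

lemma Ti_dist_succ (n : ℕ) (i : ℤ) (z : Torus2) :
    dist (Ti n i z) (Ti (n + 1) i z) ≤ |(i:ℝ)| * ee n := by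
  rw [Ti_succ_eq, Ti]
  refine (HH_lip n _ _).trans ?_
  have hK : 0 ≤ KK n := zero_le_one.trans (KK_one_le n)
  have hN := NNr_pos n
  have hN' := NNr_pos (n + 1)
  have : |(i:ℝ)| * ee n = KK n * (|(i:ℝ)| * (NN n / NN (n + 1))) := by rw [ee]; ring
  rw [this]
  refine mul_le_mul_of_nonneg_left ?_ hK
  rw [dist_add_left, dist_comm, dist_eq_norm, Prod.norm_def]
  refine max_le ?_ ?_
  · simp only [Prod.fst_sub, ← AddCircle.coe_sub]
    refine (torus1_norm_coe_le _).trans ?_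
    rw [← mul_sub, alf_succ, add_sub_cancel_left, abs_mul]
    gcongr
    rw [abs_of_pos (by positivity)]
    gcongr
    exact NN_one_le n
  · simp only [Prod.snd_sub, sub_zero]
    refine (torus1_norm_coe_le _).trans ?_
    rw [abs_mul, abs_of_pos (by positivity : (0:ℝ) < NN n / NN (n + 1))]

/-- Tail errors. -/
def rho (n : ℕ) : ℝ := ∑' k, ee (n + k)

lemma ee_summable : Summable ee := by
  refine Summable.of_nonneg_of_le ee_nonneg ee_le ?_
  have := (summable_geometric_two).mul_right ((1/2:ℝ) ^ 5)
  simpa [pow_add] using this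

lemma rho_nonneg (n : ℕ) : 0 ≤ rho n := tsum_nonneg fun _ => ee_nonneg _

lemma rho_le_aux (n : ℕ) (c : ℝ) (h : ∀ k, ee (n + k) ≤ (1 / 2) ^ (n + k + 5) * c) :
    rho n ≤ (1 / 2) ^ (n + 4) * c := by
  have h1 : HasSum (fun k : ℕ => (1 / 2 : ℝ) ^ (n + k + 5) * c) ((1 / 2) ^ (n + 4) * c) := by
    have := (hasSum_geometric_two).mul_left ((1/2:ℝ) ^ (n + 5) * c)
    have e1 : (fun k : ℕ => (1 / 2 : ℝ) ^ (n + k + 5) * c) = fun k => (1 / 2) ^ (n + 5) * c * (1 / 2) ^ k := by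
      funext k; ring
    have e2 : (1 / 2 : ℝ) ^ (n + 4) * c = (1 / 2) ^ (n + 5) * c * 2 := by ring
    rw [e1, e2]; exact this
  refine (Summable.tsum_le_tsum h ?_ h1.summable).trans h1.tsum_eq.le
  exact ee_summable.comp_injective (add_right_injective n)

lemma rho_le_a (n : ℕ) : rho n ≤ (1 / 2) ^ (n + 4) / √(NN (n + 1)) := by
  rw [div_eq_mul_inv]
  refine rho_le_aux n _ fun k => (ee_le_a _).trans ?_
  rw [div_eq_mul_inv]
  have : 0 < √(NN (n + 1) : ℝ) := Real.sqrt_pos.2 (NNr_pos _)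
  gcongr
  exact NN_mono (by omega)

lemma rho_le_b (n : ℕ) : rho n ≤ (1 / 2) ^ (n + 4) / NN n := by
  rw [div_eq_mul_inv]
  refine rho_le_aux n _ fun k => (ee_le_b _).trans ?_
  rw [div_eq_mul_inv]
  have := NNr_pos n
  gcongr
  exact NN_mono (by omega)

lemma rho_tendsto : Tendsto rho atTop (𝓝 0) := by
  refine squeeze_zero rho_nonneg (g := fun n => (1/2:ℝ) ^ n) (fun n => ?_)
    (tendsto_pow_atTop_nhds_zero_of_lt_one (by norm_num) (by norm_num))
  refine (rho_le_b n).trans ((div_le_self (by positivity) (NN_one_le n)).trans ?_)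
  exact pow_le_pow_of_le_one (by norm_num) (by norm_num) (by omega)

lemma Ti_summable (i : ℤ) : Summable fun n => |(i:ℝ)| * ee n := ee_summable.mul_left _

lemma Ti_cauchy (i : ℤ) (z : Torus2) : CauchySeq fun n => Ti n i z :=
  cauchySeq_of_dist_le_of_summable _ (fun n => Ti_dist_succ n i z) (Ti_summable i)

/-- The limit action. -/
def TT (i : ℤ) (z : Torus2) : Torus2 := limUnder atTop fun n => Ti n i z

lemma TT_tendsto (i : ℤ) (z : Torus2) : Tendsto (fun n => Ti n i z) atTop (𝓝 (TT i z)) :=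
  (Ti_cauchy i z).tendsto_limUnder

lemma TT_dist (n : ℕ) (i : ℤ) (z : Torus2) : dist (Ti n i z) (TT i z) ≤ |(i:ℝ)| * rho n := by
  have := dist_le_tsum_of_dist_le_of_tendsto _ (fun n => Ti_dist_succ n i z) (Ti_summable i)
    (TT_tendsto i z) n
  rwa [tsum_mul_left] at this

lemma Ti_continuous (n : ℕ) (i : ℤ) : Continuous (Ti n i) :=
  (HH n).continuous.comp ((HH n).symm.continuous.add continuous_const)

lemma TT_uniform (i : ℤ) : TendstoUniformly (fun n => Ti n i) (TT i) atTop := by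
  rw [Metric.tendstoUniformly_iff]
  intro ε hε
  have h := rho_tendsto.const_mul |(i:ℝ)|
  rw [mul_zero] at h
  filter_upwards [h.eventually_lt_const hε] with n hn z
  rw [dist_comm]
  exact (TT_dist n i z).trans_lt hn

lemma TT_continuous (i : ℤ) : Continuous (TT i) :=
  (TT_uniform i).continuous (Frequently.of_forall fun n => Ti_continuous n i)

lemma TT_add (i j : ℤ) (z : Torus2) : TT (i + j) z = TT i (TT j z) := by
  refine tendsto_nhds_unique (TT_tendsto (i + j) z) ?_
  simp only [Ti_add]
  exact (TT_uniform i).tendsto_comp (TT_continuous i).continuousAt (TT_tendsto j z)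

lemma TT_zero (z : Torus2) : TT 0 z = z := by
  refine tendsto_nhds_unique (TT_tendsto 0 z) ?_
  simp only [Ti_zero]; exact tendsto_const_nhds

lemma TT_iterate (m : ℕ) (z : Torus2) : (TT 1)^[m] z = TT m z := by
  induction m generalizing z with
  | zero => simp [TT_zero]
  | succ m ih =>
    rw [Function.iterate_succ_apply, ih]
    push_cast
    rw [← TT_add]

lemma TT_bij : Function.Bijective (TT 1) := by
  refine Function.bijective_iff_has_inverse.2 ⟨TT (-1), fun z => ?_, fun z => ?_⟩ <;>
  · rw [← TT_add]; simp [TT_zero]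

lemma TT_invFun : Function.invFun (TT 1) = TT (-1) := by
  funext z
  apply TT_bij.1
  rw [Function.invFun_eq (TT_bij.2 z), ← TT_add]; simp [TT_zero]

lemma Ti_mp (n : ℕ) (i : ℤ) : MeasurePreserving (Ti n i) volume volume := by
  have h1 : MeasurePreserving (HH n).symm volume volume :=
    (HH_mp n).symm (HH n).toMeasurableEquiv
  exact ((HH_mp n).comp (measurePreserving_add_right volume (((i * alf n : ℝ) : Torus1), (0 : Torus1)))).comp h1

lemma TT_mp (i : ℤ) : MeasurePreserving (TT i) volume volume := by
  refine ⟨(TT_continuous i).measurable, ?_⟩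
  have : IsProbabilityMeasure (Measure.map (TT i) (volume : Measure Torus2)) :=
    Measure.isProbabilityMeasure_map (TT_continuous i).measurable.aemeasurable
  refine ext_of_forall_integral_eq_of_IsFiniteMeasure fun f => ?_
  rw [integral_map (TT_continuous i).measurable.aemeasurable f.continuous.aestronglyMeasurable]
  have h1 : Tendsto (fun n => ∫ z, f (Ti n i z) ∂(volume : Measure Torus2)) atTop
      (𝓝 (∫ z, f (TT i z) ∂(volume : Measure Torus2))) := by
    refine tendsto_integral_of_dominated_convergence (fun _ => ‖f‖) ?_ (integrable_const _) ?_ ?_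
    · exact fun n => (f.continuous.comp (Ti_continuous n i)).aestronglyMeasurable
    · exact fun n => Eventually.of_forall fun z => f.norm_coe_le_norm _
    · exact Eventually.of_forall fun z => (f.continuous.tendsto _).comp (TT_tendsto i z)
  have h2 : ∀ n, ∫ z, f (Ti n i z) ∂(volume : Measure Torus2) = ∫ z, f z := by
    intro n
    have := integral_map (μ := (volume : Measure Torus2)) (Ti_continuous n i).measurable.aemeasurable
      (f := f) f.continuous.aestronglyMeasurable
    rw [(Ti_mp n i).map_eq] at this
    exact this.symm
  simp only [h2] at h1
  exact (tendsto_nhds_unique h1 tendsto_const_nhds)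

/-! ### Smoothness -/

/-- Increment of the lift. -/
def DD (i : ℤ) (n : ℕ) (z : ℝ × ℝ) : ℝ × ℝ :=
  (stg n).HL ((stg n).HI z + (i * alf n + i * (1 / 2 ^ (stg n).b), (i:ℝ) * (2 ^ (stg n).a / 2 ^ (stg n).b)))
    - (stg n).HL ((stg n).HI z + (i * alf n, 0))

lemma torusProj_add (p q : ℝ × ℝ) : torusProj (p + q) = torusProj p + torusProj q := by
  simp [torusProj]

lemma torusProj_sub (p q : ℝ × ℝ) : torusProj (p - q) = torusProj p - torusProj q := by
  simp [torusProj]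

lemma torusProj_continuous : Continuous torusProj :=
  ((AddCircle.continuous_mk' 1).comp continuous_fst).prodMk
    ((AddCircle.continuous_mk' 1).comp continuous_snd)

lemma DD_proj (i : ℤ) (n : ℕ) (z : ℝ × ℝ) :
    torusProj (DD i n z) = Ti (n + 1) i (torusProj z) - Ti n i (torusProj z) := by
  rw [DD, torusProj_sub, (stg n).liftH, (stg n).liftH, torusProj_add, torusProj_add, (stg n).liftI,
    Ti_succ_eq, Ti]
  have h1 : torusProj (i * alf n + i * (1 / 2 ^ (stg n).b), (i:ℝ) * (2 ^ (stg n).a / 2 ^ (stg n).b)) =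
      (((i * alf (n + 1) : ℝ) : Torus1), ((i * (NN n / NN (n + 1)) : ℝ) : Torus1)) := by
    rw [alf_succ, NN_succ, NN, mul_add]
    push_cast
    rfl
  rw [h1]
  rfl

/-- The lift of the limit map. -/
def FF (i : ℤ) (z : ℝ × ℝ) : ℝ × ℝ := (z + (i * alf 0, 0)) + ∑' n, DD i n z

lemma DD_contDiff (i : ℤ) (n : ℕ) : ContDiff ℝ ∞ (DD i n) := by
  have h1 := (stg n).pbHL.1 3 le_rfl
  have h2 := (stg n).pbHI.1 3 le_rfl
  exact (h1.comp (h2.add contDiff_const)).sub (h1.comp (h2.add contDiff_const))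

lemma DD_bound (i : ℤ) (hi : |(i:ℝ)| ≤ 1) (n k : ℕ) (hk : k < n) (z : ℝ × ℝ) :
    ‖iteratedFDeriv ℝ k (DD i n) z‖ ≤ (1 / 2) ^ n :=
  (stg_good n).2.2 (i * alf n) i hi k hk z

lemma DD_summable (i : ℤ) (hi : |(i:ℝ)| ≤ 1) (z : ℝ × ℝ) : Summable fun n => DD i n z := by
  rw [← summable_nat_add_iff 1]
  refine Summable.of_norm_bounded (g := fun n => (1/2:ℝ) ^ (n + 1)) ?_ fun n => ?_
  · exact (summable_nat_add_iff 1).2 summable_geometric_two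
  · have := DD_bound i hi (n + 1) 0 (by omega) z
    rwa [norm_iteratedFDeriv_zero] at this

lemma FF_contDiff (i : ℤ) (hi : |(i:ℝ)| ≤ 1) : ContDiff ℝ ∞ (FF i) := by
  refine (contDiff_id.add contDiff_const).add ?_
  refine contDiff_tsum_of_eventually (v := fun _ n => (1/2:ℝ) ^ n) (fun n => DD_contDiff i n)
    (fun k _ => summable_geometric_two) (fun k _ => ?_)
  rw [Nat.cofinite_eq_atTop]
  filter_upwards [eventually_gt_atTop k] with n hn z
  exact DD_bound i hi n k hn z

lemma FF_lift (i : ℤ) (hi : |(i:ℝ)| ≤ 1) : IsLiftOf (FF i) (TT i) := by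
  intro z
  have h1 : ∀ n, torusProj ((z + (i * alf 0, 0)) + ∑ k ∈ Finset.range n, DD i k z) = Ti n i (torusProj z) := by
    intro n
    induction n with
    | zero =>
      simp only [Finset.range_zero, Finset.sum_empty, add_zero, torusProj_add]
      rfl
    | succ n ih =>
      rw [Finset.sum_range_succ, ← add_assoc, torusProj_add, ih, DD_proj]
      abel
  have h2 := ((DD_summable i hi z).hasSum.tendsto_sum_nat).const_add (z + (i * alf 0, 0))
  have h3 := (torusProj_continuous.tendsto _).comp h2
  refine tendsto_nhds_unique h3 ?_
  simp only [Function.comp_def, h1]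
  exact TT_tendsto i (torusProj z)

lemma TT_diffeo : IsCkTorusDiffeo ⊤ (TT 1) := by
  refine ⟨TT_bij, ⟨FF 1, FF_contDiff 1 (by simp), FF_lift 1 (by simp)⟩, ⟨FF (-1), FF_contDiff (-1) (by simp), ?_⟩⟩
  rw [TT_invFun]
  exact FF_lift (-1) (by simp)

end


open MeasureTheory Filter Set
open scoped Topology ENNReal NNReal ContDiff

noncomputable section

/-! ### Equidistribution of periodic orbits -/

lemma exists_mul_mod (M : ℕ) (hM : 0 < M) (p : ℕ) (hp : Nat.Coprime p M) (q : ℤ) :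
    ∃ i < M, ∃ c : ℤ, (i : ℤ) * p = q + M * c := by
  have : NeZero M := ⟨hM.ne'⟩
  refine ⟨((q : ZMod M) * (p : ZMod M)⁻¹).val, ZMod.val_lt _, ?_⟩
  have h : (((((q : ZMod M) * (p : ZMod M)⁻¹).val : ℤ) * p - q : ℤ) : ZMod M) = 0 := by
    push_cast
    rw [ZMod.natCast_zmod_val, mul_assoc, mul_comm _ (p : ZMod M), ZMod.coe_mul_inv_eq_one p hp, mul_one,
      sub_self]
  obtain ⟨c, hc⟩ := (ZMod.intCast_zmod_eq_zero_iff_dvd _ M).1 h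
  exact ⟨c, by rw [← hc]; ring⟩

lemma floor_approx (N : ℕ) (hN : 0 < N) (x : ℝ) : |(⌊(N:ℝ) * x⌋ : ℝ) / N - x| ≤ 1 / N := by
  have hN' : (0:ℝ) < N := by exact_mod_cast hN
  have h1 := Int.floor_le ((N:ℝ) * x)
  have h2 := (Int.lt_floor_add_one ((N:ℝ) * x)).le
  have : (⌊(N:ℝ) * x⌋ : ℝ) / N - x = (⌊(N:ℝ) * x⌋ - N * x) / N := by field_simp
  rw [this, abs_div, abs_of_pos hN']
  gcongr
  rw [abs_le]; constructor <;> linarith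

lemma lam_approx (n : ℕ) (D : Torus2) : ∃ i < NN (n + 1), ∃ s w : Torus1,
    (((i : ℤ) * alf (n + 1) : ℝ) : Torus1) = D.1 + s ∧
    NN n • ((((i : ℤ) * alf (n + 1) : ℝ) : Torus1)) = D.2 + w ∧
    ‖s‖ ≤ 1 / NN n ∧ ‖w‖ ≤ NN n / NN (n + 1) := by
  obtain ⟨x, hx, -⟩ := torus1_exists_rep D.1
  obtain ⟨y, hy, -⟩ := torus1_exists_rep D.2
  obtain ⟨d, hd, hM⟩ := NN_dvd_lt n
  obtain ⟨p, hp, hpa⟩ := alf_num (n + 1)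
  have hN := NNr_pos n
  have hM0 := NNr_pos (n + 1)
  have hMr : (NN (n + 1) : ℝ) = NN n * (2 ^ d : ℕ) := by exact_mod_cast hM
  have hK : (0:ℝ) < (2 ^ d : ℕ) := by positivity
  set k : ℤ := ⌊((2 ^ d : ℕ) : ℝ) * y⌋ with hk
  set j : ℤ := ⌊(NN n : ℝ) * (x - k / NN (n + 1))⌋ with hj
  have hcop : Nat.Coprime p (NN (n + 1)) := by
    rw [NN_succ]; exact Nat.Coprime.pow_right _ hp.coprime_two_right
  obtain ⟨i, hi, c, hc⟩ := exists_mul_mod (NN (n + 1)) (NN_pos _) p hcop (k + (2 ^ d : ℕ) * j)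
  have hcr : (i : ℝ) * p = k + (2 ^ d : ℕ) * j + NN (n + 1) * c := by exact_mod_cast hc
  have ha : alf (n + 1) = p / NN (n + 1) := by rw [← hpa]; field_simp
  have hb1 := floor_approx (NN n) (NN_pos n) (x - k / NN (n + 1))
  have hb2 := floor_approx (2 ^ d) (by positivity) y
  rw [← hk] at hb2
  rw [← hj] at hb1
  refine ⟨i, hi, (((j : ℝ) / NN n - (x - k / NN (n + 1)) : ℝ) : Torus1),
    (((k : ℝ) / (2 ^ d : ℕ) - y : ℝ) : Torus1), ?_, ?_, ?_, ?_⟩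
  · rw [← hx, ← AddCircle.coe_add]
    have : (((i : ℤ) : ℝ) * alf (n + 1) : ℝ) = x + ((j : ℝ) / NN n - (x - k / NN (n + 1))) + c := by
      rw [ha, Int.cast_natCast, ← mul_div_assoc, hcr, hMr]; field_simp; ring
    rw [this, AddCircle.coe_add, coe_int, add_zero]
  · rw [← hy, ← AddCircle.coe_add, ← coe_nat_mul]
    have : ((NN n : ℝ) * (((i : ℤ) : ℝ) * alf (n + 1)) : ℝ) = y + ((k : ℝ) / (2 ^ d : ℕ) - y) + ((j + NN n * c : ℤ) : ℝ) := by
      rw [ha, Int.cast_natCast, ← mul_div_assoc, hcr, hMr]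
      push_cast
      field_simp
      ring
    rw [this, AddCircle.coe_add, coe_int, add_zero]
  · exact (torus1_norm_coe_le _).trans hb1
  · refine (torus1_norm_coe_le _).trans (hb2.trans (le_of_eq ?_))
    rw [hMr]; field_simp

lemma HH_small (n : ℕ) (u : Torus2) (s w : Torus1) (hs : ‖s‖ ≤ 1 / NN n) (hw : ‖w‖ ≤ NN n / NN (n + 1)) :
    dist (HH n (u + (s, w))) (HH n u) ≤ (1 / 2) ^ (n + 3) := by
  have h1 := HH_lipX n u s
  have h2 := HH_lip n (u + (s, w)) (u + (s, 0))
  have h3 : dist (u + (s, w)) (u + (s, 0)) = ‖w‖ := by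
    rw [dist_add_left, dist_eq_norm]; simp [Prod.norm_def]
  rw [h3] at h2
  have h4 : KK n * ‖w‖ ≤ ee n := by
    rw [ee, mul_div_assoc]
    exact mul_le_mul_of_nonneg_left hw (zero_le_one.trans (KK_one_le n))
  have h5 : LX n * ‖s‖ ≤ LX n / NN n := by
    rw [div_eq_mul_one_div]
    exact mul_le_mul_of_nonneg_left hs (LX_nonneg n)
  have h6 := LX_div_le n
  have h7 := ee_le n
  have h8 := dist_triangle (HH n (u + (s, w))) (HH n (u + (s, 0))) (HH n u)
  have e1 : (1/2:ℝ) ^ (n + 5) = (1/2) ^ (n + 3) / 4 := by ring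
  have e2 : (1/2:ℝ) ^ (n + 4) = (1/2) ^ (n + 3) / 2 := by ring
  have e3 : (0:ℝ) < (1/2:ℝ) ^ (n + 3) := by positivity
  linarith

lemma Ti_shift (n : ℕ) (z z' : Torus2) : ∃ j < NN (n + 1), ∀ i : ℤ,
    dist (Ti (n + 1) i (Ti (n + 1) (j : ℤ) z)) (Ti (n + 1) i z') ≤ (1 / 2) ^ (n + 3) := by
  obtain ⟨j, hj, s, w, h1, h2, hs, hw⟩ := lam_approx n ((HH n).symm z' - (HH n).symm z)
  refine ⟨j, hj, fun i => ?_⟩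
  have e : Ti (n + 1) (j : ℤ) z = HH n ((HH n).symm z' + (s, w)) := by
    rw [Ti, flow_succ, h2, h1]
    congr 1
    ext
    · simp only [Prod.fst_add, Prod.fst_sub]; abel
    · simp only [Prod.snd_add, Prod.snd_sub]; abel
  rw [e, Ti, flow_succ, Ti, flow_succ, Homeomorph.symm_apply_apply, add_right_comm]
  exact HH_small n _ s w hs hw

lemma Ti_period (n : ℕ) (z : Torus2) : Ti n (NN n) z = z := by
  have : (((((NN n : ℕ) : ℤ) : ℝ) * alf n : ℝ) : Torus1) = 0 := by
    obtain ⟨p, _, hp⟩ := alf_num n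
    rw [Int.cast_natCast, hp]
    exact_mod_cast coe_int p
  rw [Ti, this]
  have : ((0 : Torus1), (0 : Torus1)) = 0 := rfl
  rw [this, add_zero, Homeomorph.apply_symm_apply]

lemma sum_range_shift (F : ℕ → ℝ) (M : ℕ) (hF : ∀ i, F (i + M) = F i) (j : ℕ) :
    ∑ i ∈ Finset.range M, F (i + j) = ∑ i ∈ Finset.range M, F i := by
  induction j with
  | zero => rfl
  | succ j ih =>
    rw [← ih]
    have h1 := Finset.sum_range_succ (fun i => F (i + j)) M
    have h2 := Finset.sum_range_succ' (fun i => F (i + j)) M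
    have h3 := hF j
    have h4 : ∀ i, F (i + 1 + j) = F (i + (j + 1)) := fun i => by congr 1; omega
    simp only [h4, zero_add] at h2
    rw [add_comm M j] at h1
    linarith

lemma TT_close (n : ℕ) (i : ℕ) (hi : i < NN n) (z : Torus2) :
    dist (Ti n (i : ℤ) z) (TT (i : ℤ) z) ≤ (1 / 2) ^ (n + 4) := by
  refine (TT_dist n i z).trans ?_
  have h1 : |((i : ℤ) : ℝ)| ≤ NN n := by
    rw [Int.cast_natCast, abs_of_nonneg (by positivity)]; exact_mod_cast hi.le
  have := NNr_pos n
  calc _ ≤ (NN n : ℝ) * ((1 / 2) ^ (n + 4) / NN n) :=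
        mul_le_mul h1 (rho_le_b n) (rho_nonneg n) this.le
    _ = _ := by field_simp

lemma avg_osc (f : Torus2 → ℝ) (ε δ : ℝ) (hf : ∀ a b, dist a b ≤ δ → |f a - f b| ≤ ε)
    (n : ℕ) (hn : (1 / 2 : ℝ) ^ (n + 3) ≤ δ) (z z' : Torus2) :
    |∑ i ∈ Finset.range (NN (n + 1)), f (TT (i : ℤ) z) - ∑ i ∈ Finset.range (NN (n + 1)), f (TT (i : ℤ) z')|
      ≤ NN (n + 1) * (3 * ε) := by
  obtain ⟨j, hj, h⟩ := Ti_shift n z z'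
  have hper := sum_range_shift (fun i => f (Ti (n + 1) (i : ℤ) z)) (NN (n + 1)) (fun i => by
    push_cast
    rw [Ti_add, Ti_period]) j
  have hper2 : ∑ i ∈ Finset.range (NN (n + 1)), f (Ti (n + 1) (i : ℤ) z) =
      ∑ i ∈ Finset.range (NN (n + 1)), f (Ti (n + 1) (i : ℤ) (Ti (n + 1) (j : ℤ) z)) := by
    rw [← hper]
    refine Finset.sum_congr rfl fun i _ => ?_
    push_cast
    rw [Ti_add]
  have hcl : (1 / 2 : ℝ) ^ (n + 1 + 4) ≤ δ :=
    (pow_le_pow_of_le_one (by norm_num) (by norm_num) (by omega)).trans hn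
  have key : ∀ y, |∑ i ∈ Finset.range (NN (n + 1)), f (Ti (n + 1) (i : ℤ) y) -
      ∑ i ∈ Finset.range (NN (n + 1)), f (TT (i : ℤ) y)| ≤ NN (n + 1) * ε := by
    intro y
    rw [← Finset.sum_sub_distrib]
    refine (Finset.abs_sum_le_sum_abs _ _).trans ?_
    refine (Finset.sum_le_card_nsmul _ _ ε fun i hi => ?_).trans (by simp)
    exact hf _ _ ((TT_close (n + 1) i (Finset.mem_range.1 hi) y).trans hcl)
  have key2 : |∑ i ∈ Finset.range (NN (n + 1)), f (Ti (n + 1) (i : ℤ) (Ti (n + 1) (j : ℤ) z)) -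
      ∑ i ∈ Finset.range (NN (n + 1)), f (Ti (n + 1) (i : ℤ) z')| ≤ NN (n + 1) * ε := by
    rw [← Finset.sum_sub_distrib]
    refine (Finset.abs_sum_le_sum_abs _ _).trans ?_
    refine (Finset.sum_le_card_nsmul _ _ ε fun i hi => ?_).trans (by simp)
    exact hf _ _ ((h i).trans hn)
  have k1 := abs_le.1 (key z)
  have k2 := abs_le.1 (key z')
  have k3 := abs_le.1 key2
  rw [← hper2] at k3
  rw [abs_le]
  constructor <;> linarith

lemma inv_integral (f : BoundedContinuousFunction Torus2 ℝ) (μ : Measure Torus2) [IsProbabilityMeasure μ]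
    (hμ : MeasurePreserving (TT 1) μ μ) (ε δ : ℝ) (hf : ∀ a b, dist a b ≤ δ → |f a - f b| ≤ ε)
    (n : ℕ) (hn : (1 / 2 : ℝ) ^ (n + 3) ≤ δ) :
    |NN (n + 1) * ∫ z, f z ∂μ - ∑ i ∈ Finset.range (NN (n + 1)), f (TT (i : ℤ) 0)| ≤ NN (n + 1) * (3 * ε) := by
  have hi : ∀ i : ℕ, ∫ z, f (TT (i : ℤ) z) ∂μ = ∫ z, f z ∂μ := by
    intro i
    have h1 : MeasurePreserving (TT (i : ℤ)) μ μ := by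
      have := hμ.iterate i
      convert this using 1
      funext z; rw [TT_iterate]
    have := integral_map (μ := μ) (TT_continuous i).measurable.aemeasurable
      (f := f) f.continuous.aestronglyMeasurable
    rw [h1.map_eq] at this
    exact this.symm
  have hIntg : ∀ i : ℕ, Integrable (fun z => f (TT (i : ℤ) z)) μ := fun i =>
    (f.compContinuous ⟨_, TT_continuous i⟩).integrable μ
  have hs : NN (n + 1) * ∫ z, f z ∂μ = ∫ z, ∑ i ∈ Finset.range (NN (n + 1)), f (TT (i : ℤ) z) ∂μ := by
    rw [integral_finsetSum _ fun i _ => hIntg i]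
    simp [hi]
  have hc : ∑ i ∈ Finset.range (NN (n + 1)), f (TT (i : ℤ) 0) =
    ∫ z, ∑ i ∈ Finset.range (NN (n + 1)), f (TT (i : ℤ) 0) ∂μ := by simp
  rw [hs, hc, ← integral_sub (integrable_finsetSum _ fun i _ => hIntg i) (integrable_const _)]
  have := norm_integral_le_of_norm_le_const (μ := μ) (C := NN (n + 1) * (3 * ε))
    (f := fun z => ∑ i ∈ Finset.range (NN (n + 1)), f (TT (i : ℤ) z) -
      ∑ i ∈ Finset.range (NN (n + 1)), f (TT (i : ℤ) 0))
    (Eventually.of_forall fun z => avg_osc f ε δ hf n hn z 0)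
  simpa using this

lemma TT_ue : UniquelyErgodicWithVolume (TT 1) := by
  refine ⟨TT_mp 1, fun μ hP hμ => ?_⟩
  refine ext_of_forall_integral_eq_of_IsFiniteMeasure fun f => ?_
  refine eq_of_forall_dist_le fun ε hε => ?_
  have huc := CompactSpace.uniformContinuous_of_continuous f.continuous
  obtain ⟨δ, hδ, h⟩ := Metric.uniformContinuous_iff.1 huc (ε / 6) (by positivity)
  have hf : ∀ a b, dist a b ≤ δ / 2 → |f a - f b| ≤ ε / 6 := fun a b hab =>
    (h (lt_of_le_of_lt hab (by linarith))).le
  obtain ⟨n, hn⟩ := exists_pow_lt_of_lt_one (show 0 < δ / 2 by linarith) (show (1/2:ℝ) < 1 by norm_num)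
  have hn' : (1 / 2 : ℝ) ^ (n + 3) ≤ δ / 2 :=
    (pow_le_pow_of_le_one (by norm_num) (by norm_num) (by omega)).trans hn.le
  have h1 := abs_le.1 (inv_integral f μ hμ _ _ hf n hn')
  have h2 := abs_le.1 (inv_integral f volume (TT_mp 1) _ _ hf n hn')
  have hN := NNr_pos (n + 1)
  rw [Real.dist_eq, abs_le]
  constructor <;> nlinarith

end


open MeasureTheory Filter Set
open scoped Topology ENNReal NNReal ContDiff

noncomputable section

/-! ### The isomorphism with a rotation -/

/-- The approximate factor maps. -/
def th (n : ℕ) (z : Torus2) : Torus1 := ((HH n).symm z).1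

lemma th_succ (n : ℕ) (z : Torus2) : dist (th n z) (th (n + 1) z) ≤ 1 / NN n := by
  have h := NNr_pos n
  rw [th, th, HH_symm_succ, hh, hT_symm_apply, dist_comm, dist_eq_norm, add_sub_cancel_left]
  refine (torus1_norm_coe_le _).trans ?_
  rw [abs_mul, abs_of_pos (by positivity), ← one_div]
  exact mul_le_of_le_one_right (by positivity) (betaT_abs_le _ _)

lemma NN_geom (n k : ℕ) : 1 / (NN (n + k) : ℝ) ≤ 1 / NN n * (1 / 2) ^ k := by
  induction k with
  | zero => simp
  | succ k ih =>
    have h := NN_double (n + k)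
    have h' : (2:ℝ) * NN (n + k) ≤ NN (n + (k + 1)) := by exact_mod_cast h
    have h0 := NNr_pos (n + k)
    calc 1 / (NN (n + (k + 1)) : ℝ) ≤ 1 / (2 * NN (n + k)) := by gcongr
      _ = 1 / (NN (n + k)) * (1 / 2) := by field_simp
      _ ≤ 1 / NN n * (1 / 2) ^ k * (1 / 2) := by gcongr
      _ = _ := by ring

lemma NN_summable : Summable fun n => 1 / (NN n : ℝ) := by
  refine Summable.of_nonneg_of_le (fun n => by positivity) (fun n => by simpa using NN_geom 0 n) ?_
  simpa using (summable_geometric_two).mul_left (1 / (NN 0 : ℝ))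

lemma NN_tail (n : ℕ) : ∑' k, 1 / (NN (n + k) : ℝ) ≤ 2 / NN n := by
  have h1 := (hasSum_geometric_two).mul_left (1 / (NN n : ℝ))
  refine (Summable.tsum_le_tsum (NN_geom n) ?_ h1.summable).trans ?_
  · exact NN_summable.comp_injective (add_right_injective n)
  · rw [h1.tsum_eq]; exact le_of_eq (by ring)

/-- The factor map. -/
def Th (z : Torus2) : Torus1 := limUnder atTop fun n => th n z

lemma Th_tendsto (z : Torus2) : Tendsto (fun n => th n z) atTop (𝓝 (Th z)) :=
  (cauchySeq_of_dist_le_of_summable _ (fun n => th_succ n z) NN_summable).tendsto_limUnder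

lemma Th_dist (n : ℕ) (z : Torus2) : dist (th n z) (Th z) ≤ 2 / NN n :=
  (dist_le_tsum_of_dist_le_of_tendsto _ (fun n => th_succ n z) NN_summable (Th_tendsto z) n).trans
    (NN_tail n)

lemma th_continuous (n : ℕ) : Continuous (th n) := continuous_fst.comp (HH n).symm.continuous

lemma NN_inv_tendsto : Tendsto (fun n => 2 / (NN n : ℝ)) atTop (𝓝 0) := by
  have := NN_summable.tendsto_atTop_zero.const_mul 2
  simp only [mul_one_div, mul_zero] at this
  exact this

lemma Th_uniform : TendstoUniformly th Th atTop := by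
  rw [Metric.tendstoUniformly_iff]
  intro ε hε
  filter_upwards [NN_inv_tendsto.eventually_lt_const hε] with n hn z
  rw [dist_comm]
  exact (Th_dist n z).trans_lt hn

lemma Th_continuous : Continuous Th :=
  Th_uniform.continuous (Frequently.of_forall fun n => th_continuous n)

/-- The rotation number. -/
def alpha : ℝ := ∑' k, 1 / (NN k : ℝ)

lemma alf_tendsto : Tendsto alf atTop (𝓝 alpha) := by
  have := NN_summable.hasSum.tendsto_sum_nat
  exact (tendsto_add_atTop_iff_nat 1).2 this

lemma Th_TT (z : Torus2) : Th (TT 1 z) = Th z + (alpha : Torus1) := by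
  have h1 : Tendsto (fun n => th n (Ti n 1 z)) atTop (𝓝 (Th (TT 1 z))) :=
    Th_uniform.tendsto_comp Th_continuous.continuousAt (TT_tendsto 1 z)
  have h2 : ∀ n, th n (Ti n 1 z) = th n z + (alf n : Torus1) := by
    intro n
    rw [th, Ti, Homeomorph.symm_apply_apply]
    simp [th]
  simp only [h2] at h1
  exact tendsto_nhds_unique h1 ((Th_tendsto z).add
    (((AddCircle.continuous_mk' 1).tendsto _).comp alf_tendsto))

lemma alpha_irrational : Irrational alpha := by
  rintro ⟨q, hq⟩
  have hb : (0:ℝ) < q.den := by exact_mod_cast q.den_pos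
  have hqa : (q.den : ℝ) * alpha = q.num := by
    rw [← hq]; exact_mod_cast Rat.den_mul_eq_num q
  have hfar : ∀ n, 1 ≤ (q.den : ℝ) * (2 * (1/2) ^ (n + 5)) := by
    intro n
    obtain ⟨p, -, hp⟩ := alf_num n
    have hsp : alf n + ∑' k, 1 / (NN (n + 1 + k) : ℝ) = alpha := by
      have := NN_summable.sum_add_tsum_nat_add (n + 1)
      rw [alf, alpha, ← this]
      simp only [add_comm]
    set r := ∑' k, 1 / (NN (n + 1 + k) : ℝ) with hr
    have hr0 : 0 < r := by
      have hs : Summable fun k => 1 / (NN (n + 1 + k) : ℝ) :=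
        NN_summable.comp_injective (add_right_injective (n + 1))
      exact hs.tsum_pos (fun k => by positivity) 0 (by have := NNr_pos (n + 1 + 0); positivity)
    have hr1 : r ≤ 2 / NN (n + 1) := NN_tail (n + 1)
    have hN := NNr_pos n
    have hN' := NNr_pos (n + 1)
    have e : ((NN n * q.num - q.den * p : ℤ) : ℝ) = q.den * (NN n * r) := by
      push_cast
      rw [← hqa, ← hp, ← hsp]; ring
    have hpos : 0 < (NN n * q.num - q.den * p : ℤ) := by
      have : (0:ℝ) < ((NN n * q.num - q.den * p : ℤ) : ℝ) := by rw [e]; positivity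
      exact_mod_cast this
    have h1 : (1:ℝ) ≤ ((NN n * q.num - q.den * p : ℤ) : ℝ) := by exact_mod_cast hpos
    rw [e] at h1
    refine h1.trans (mul_le_mul_of_nonneg_left ?_ hb.le)
    have h2 := ee_le n
    have h3 : (NN n : ℝ) / NN (n + 1) ≤ ee n := by
      rw [ee, mul_div_assoc]
      exact le_mul_of_one_le_left (by positivity) (KK_one_le n)
    calc (NN n : ℝ) * r ≤ NN n * (2 / NN (n + 1)) := by gcongr
      _ = 2 * (NN n / NN (n + 1)) := by ring
      _ ≤ _ := by linarith
  have ht : Tendsto (fun n : ℕ => (q.den : ℝ) * (2 * (1/2) ^ (n + 5))) atTop (𝓝 0) := by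
    have := ((tendsto_add_atTop_iff_nat 5).2
      (tendsto_pow_atTop_nhds_zero_of_lt_one (r := (1/2:ℝ)) (by norm_num) (by norm_num))).const_mul ((q.den : ℝ) * 2)
    simpa [mul_assoc] using this
  obtain ⟨n, hn⟩ := (ht.eventually_lt_const one_pos).exists
  exact absurd (hfar n) (not_le.2 hn)

lemma HHs_mp (n : ℕ) : MeasurePreserving (HH n).symm volume volume :=
  (HH_mp n).symm (HH n).toMeasurableEquiv

lemma th_mp (n : ℕ) : MeasurePreserving (th n) volume volume := by
  have h1 : MeasurePreserving (Prod.fst : Torus2 → Torus1) volume volume :=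
    measurePreserving_fst
  exact h1.comp (HHs_mp n)

lemma Th_map : Measure.map Th volume = volume := by
  have : IsProbabilityMeasure (Measure.map Th (volume : Measure Torus2)) :=
    Measure.isProbabilityMeasure_map Th_continuous.measurable.aemeasurable
  refine ext_of_forall_integral_eq_of_IsFiniteMeasure fun f => ?_
  rw [integral_map Th_continuous.measurable.aemeasurable f.continuous.aestronglyMeasurable]
  have h1 : Tendsto (fun n => ∫ z, f (th n z) ∂(volume : Measure Torus2)) atTop
      (𝓝 (∫ z, f (Th z) ∂(volume : Measure Torus2))) := by
    refine tendsto_integral_of_dominated_convergence (fun _ => ‖f‖) ?_ (integrable_const _) ?_ ?_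
    · exact fun n => (f.continuous.comp (th_continuous n)).aestronglyMeasurable
    · exact fun n => Eventually.of_forall fun z => f.norm_coe_le_norm _
    · exact Eventually.of_forall fun z => (f.continuous.tendsto _).comp (Th_tendsto z)
  have h2 : ∀ n, ∫ z, f (th n z) ∂(volume : Measure Torus2) = ∫ z, f z := by
    intro n
    have := integral_map (μ := (volume : Measure Torus2)) (th_continuous n).measurable.aemeasurable
      (f := f) f.continuous.aestronglyMeasurable
    rw [(th_mp n).map_eq] at this
    exact this.symm
  simp only [h2] at h1
  exact (tendsto_nhds_unique h1 tendsto_const_nhds)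

/-- Good sets. -/
def GG (n : ℕ) : Set Torus2 := {p | 1 / (LL n : ℝ) ≤ ‖((HH (n + 1)).symm p).2‖}

lemma GG_meas (n : ℕ) : MeasurableSet (GG n) := by
  refine IsClosed.measurableSet (isClosed_le continuous_const ?_)
  exact (continuous_snd.comp (HH (n + 1)).symm.continuous).norm

lemma GG_vol (n : ℕ) : volume (GG n)ᶜ ≤ ENNReal.ofReal (2 * (1 / 2) ^ n) := by
  have h1 : MeasurePreserving (Prod.snd : Torus2 → Torus1) volume volume := measurePreserving_snd
  have h2 := h1.comp (HHs_mp (n + 1))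
  have e : (GG n)ᶜ ⊆ (Prod.snd ∘ (HH (n + 1)).symm) ⁻¹' (Metric.closedBall 0 (1 / (LL n : ℝ))) := by
    intro p hp
    simp only [GG, mem_compl_iff, mem_ofPred_eq, not_le] at hp
    simpa using hp.le
  refine (measure_mono e).trans ?_
  rw [h2.measure_preimage Metric.isClosed_closedBall.measurableSet.nullMeasurableSet,
    AddCircle.volume_closedBall]
  refine ENNReal.ofReal_le_ofReal ((min_le_right _ _).trans ?_)
  have h3 : ((2:ℝ) ^ n) ≤ LL n := by exact_mod_cast LL_pow n
  rw [div_pow, one_pow]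
  gcongr

/-- Sections. -/
def PP (n : ℕ) (t : Torus1) : Torus2 := HH n (t, NN n • t + ((1/2 : ℝ) : Torus1))

lemma PP_continuous (n : ℕ) : Continuous (PP n) := by
  refine (HH n).continuous.comp ?_
  fun_prop

lemma GG_close (n : ℕ) (p : Torus2) (hp : p ∈ GG n) : dist p (PP n (Th p)) ≤ (1 / 2) ^ (n + 3) := by
  have hp' : 1 / (LL n : ℝ) ≤ ‖((HH (n + 1)).symm p).2‖ := hp
  have hx : ((HH (n + 1)).symm p).1 = th (n + 1) p := rfl
  have hd := Th_dist (n + 1) p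
  have ep : p = HH n (hh n ((HH (n + 1)).symm p)) := by
    rw [← HH_succ, Homeomorph.apply_symm_apply]
  set q := (HH (n + 1)).symm p with hq
  set t := Th p with ht
  set x := th (n + 1) p with hx'
  have hN := NNr_pos n
  have hN' := NNr_pos (n + 1)
  have eh : hh n q = (x, NN n • x + ((1/2 : ℝ) : Torus1)) + (-((((NN n : ℝ)⁻¹ * betaT (LL n) q.2 : ℝ)) : Torus1), 0) := by
    rw [hh, hT_apply, ← betaT_plateau (LL_ge n) hp', hx]
    ext
    · simp only [Prod.fst_add]; abel
    · simp only [Prod.snd_add]; abel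
  have d1 : dist p (HH n (x, NN n • x + ((1/2 : ℝ) : Torus1))) ≤ (1/2) ^ (n + 4) := by
    rw [ep, eh]
    refine (HH_lipX n _ _).trans (le_trans ?_ (LX_div_le n))
    rw [div_eq_mul_one_div]
    refine mul_le_mul_of_nonneg_left ?_ (LX_nonneg n)
    rw [norm_neg]
    refine (torus1_norm_coe_le _).trans ?_
    rw [abs_mul, abs_of_pos (by positivity), ← one_div]
    exact mul_le_of_le_one_right (by positivity) (betaT_abs_le _ _)
  have d2 : dist (HH n (x, NN n • x + ((1/2 : ℝ) : Torus1))) (PP n t) ≤ 2 * ee n := by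
    refine (HH_lip n _ _).trans ?_
    have : 2 * ee n = KK n * (NN n * (2 / NN (n + 1))) := by rw [ee]; ring
    rw [this]
    refine mul_le_mul_of_nonneg_left ?_ (zero_le_one.trans (KK_one_le n))
    rw [Prod.dist_eq]
    refine max_le ?_ ?_
    · exact hd.trans (le_mul_of_one_le_left (by positivity) (NN_one_le n))
    · change dist (NN n • x + ((1/2 : ℝ) : Torus1)) (NN n • t + ((1/2 : ℝ) : Torus1)) ≤ _
      rw [dist_add_right, dist_eq_norm, ← smul_sub]
      refine (nsmul_norm_le _ _).trans ?_
      rw [← dist_eq_norm]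
      exact mul_le_mul_of_nonneg_left hd hN.le
  have h7 := ee_le n
  have h8 := dist_triangle p (HH n (x, NN n • x + ((1/2 : ℝ) : Torus1))) (PP n t)
  have e1 : (1/2:ℝ) ^ (n + 5) = (1/2) ^ (n + 3) / 4 := by ring
  have e2 : (1/2:ℝ) ^ (n + 4) = (1/2) ^ (n + 3) / 2 := by ring
  linarith

/-- The inverse of the factor map. -/
def phi (t : Torus1) : Torus2 := limUnder atTop fun n => PP n t

/-- Eventually good points. -/
def A0 : Set Torus2 := {p | ∀ᶠ n in atTop, p ∈ GG n}

lemma phi_Th {p : Torus2} (hp : p ∈ A0) : phi (Th p) = p := by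
  refine Tendsto.limUnder_eq ?_
  rw [tendsto_iff_dist_tendsto_zero]
  refine squeeze_zero' (Eventually.of_forall fun _ => dist_nonneg) (g := fun n : ℕ => (1/2:ℝ) ^ (n + 3)) ?_ ?_
  · filter_upwards [hp] with n hn
    rw [dist_comm]; exact GG_close n p hn
  · exact (tendsto_add_atTop_iff_nat 3).2
      (tendsto_pow_atTop_nhds_zero_of_lt_one (by norm_num) (by norm_num))

lemma A0_meas : MeasurableSet A0 := by
  have : A0 = ⋃ N : ℕ, ⋂ n : ℕ, ⋂ _ : N ≤ n, GG n := by
    ext p; simp [A0, eventually_atTop]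
  rw [this]
  exact MeasurableSet.iUnion fun N => MeasurableSet.iInter fun n => MeasurableSet.iInter fun _ => GG_meas n

lemma A0_ae : ∀ᵐ p ∂(volume : Measure Torus2), p ∈ A0 := by
  have hs : ∑' n, volume (GG n)ᶜ ≠ ⊤ := by
    refine ne_top_of_le_ne_top ?_ (ENNReal.tsum_le_tsum GG_vol)
    exact (summable_geometric_two.mul_left 2).tsum_ofReal_ne_top
  filter_upwards [ae_eventually_notMem hs] with p hp
  filter_upwards [hp] with n hn
  simpa using hn

lemma phi_meas : Measurable phi := by
  have h : ∀ n, StronglyMeasurable (PP n) := fun n => (PP_continuous n).stronglyMeasurable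
  exact (StronglyMeasurable.limUnder h).measurable

lemma TT_iso : IsoToIrrationalRotation (TT 1) := by
  set A : Set Torus2 := {p | ∀ k : ℕ, TT k p ∈ A0} with hA
  set B : Set Torus1 := {t | phi t ∈ A ∧ Th (phi t) = t} with hB
  have hAm : MeasurableSet A := by
    have : A = ⋂ k : ℕ, (TT k) ⁻¹' A0 := by ext; simp [hA]
    rw [this]
    exact MeasurableSet.iInter fun k => (TT_continuous k).measurable A0_meas
  have hAA0 : ∀ p ∈ A, p ∈ A0 := fun p hp => by
    have := hp 0
    simpa [TT_zero] using this
  have hAT : MapsTo (TT 1) A A := by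
    intro p hp k
    rw [← TT_add]
    exact_mod_cast hp (k + 1)
  have hAv : volume Aᶜ = 0 := by
    have : ∀ᵐ p ∂(volume : Measure Torus2), p ∈ A := by
      simp only [hA, mem_ofPred_eq]
      rw [ae_all_iff]
      exact fun k => (TT_mp k).quasiMeasurePreserving.ae A0_ae
    exact this
  have hBm : MeasurableSet B :=
    (phi_meas hAm).inter (measurableSet_eq_fun (Th_continuous.measurable.comp phi_meas) measurable_id)
  have hTB : MapsTo Th A B := by
    intro p hp
    have := phi_Th (hAA0 p hp)
    simp only [hB, mem_ofPred_eq, this]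
    exact ⟨hp, trivial⟩
  refine ⟨alpha, alpha_irrational, A, B, Th, phi, hAm, hBm, hAv, ?_, hAT, ?_,
    Th_continuous.measurable, phi_meas, hTB, fun t ht => ht.1, fun p hp => phi_Th (hAA0 p hp),
    fun t ht => ht.2, Th_map, fun p _ => Th_TT p⟩
  · rw [← Th_map, Measure.map_apply Th_continuous.measurable hBm.compl]
    refine measure_mono_null ?_ hAv
    intro p hp hpA
    exact hp (hTB hpA)
  · intro t ht
    have h1 := hAT ht.1
    have h2 := Th_TT (phi t)
    rw [ht.2] at h2
    have h3 := hTB h1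
    rw [h2] at h3
    exact h3

end


open MeasureTheory Filter Set
open scoped Topology ENNReal NNReal ContDiff

noncomputable section

/-! ### Entropy: lower bound -/

lemma LL_ten (n : ℕ) : 10 ≤ LL n := by
  have h : NN 0 ≤ NN (n + 2) := NN_mono (by omega)
  rw [NN_zero, NN_succ2] at h
  exact (Nat.pow_le_pow_iff_right (by norm_num)).1 h

lemma sawtooth_ivt {L : ℕ} (hL : 3 ≤ L) {w : ℝ} (h1 : 2 / (L:ℝ) ≤ w) (h2 : w ≤ 1 - 2 / L) {c : ℝ}
    (hc1 : w - 1 ≤ c) (hc2 : c ≤ w) : ∃ y : ℝ, betaR L (y + w) - betaR L y = c := by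
  have hL0 : (0:ℝ) < 1 / L := by positivity
  have e2 : (2:ℝ) / L = 2 * (1 / L) := by ring
  rw [e2] at h1 h2
  have hcont : Continuous (betaR L) := (PB_betaR.1 L hL).continuous
  have hab : 1 / (L:ℝ) ≤ 1 - 1 / L := by linarith
  have hiv := intermediate_value_Icc' hab (f := fun y => betaR L (y + w) - betaR L y)
    (by fun_prop : Continuous fun y => betaR L (y + w) - betaR L y).continuousOn
  have fa : betaR L (1 / L + w) - betaR L (1 / L) = w := by
    rw [betaR_plateau hL (by linarith) (by linarith), betaR_plateau hL le_rfl hab]; ring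
  have fb : betaR L (1 - 1 / L + w) - betaR L (1 - 1 / L) = w - 1 := by
    have : (1 - 1 / (L:ℝ) + w) = (w - 1 / L) + 1 := by ring
    rw [this, betaR_periodic L, betaR_plateau hL (by linarith) (by linarith),
      betaR_plateau hL hab le_rfl]; ring
  have : c ∈ Icc (betaR L (1 - 1 / L + w) - betaR L (1 - 1 / L)) (betaR L (1 / L + w) - betaR L (1 / L)) := by
    rw [fa, fb]; exact ⟨hc1, hc2⟩
  obtain ⟨y, -, hy⟩ := hiv this
  exact ⟨y, hy⟩

lemma exists_root_near (N : ℕ) (hN : 0 < N) (a b : Torus1) :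
    ∃ x r : Torus1, x = a + r ∧ N • x = b ∧ ‖r‖ ≤ 1 / N := by
  have hN' : (0:ℝ) < N := by exact_mod_cast hN
  obtain ⟨a', ha, -⟩ := torus1_exists_rep a
  obtain ⟨b', hb, -⟩ := torus1_exists_rep b
  have h := floor_approx N hN (a' - b' / N)
  set k : ℤ := ⌊(N:ℝ) * (a' - b' / N)⌋
  refine ⟨(((b' + k) / N : ℝ) : Torus1), (((k:ℝ) / N - (a' - b' / N) : ℝ) : Torus1), ?_, ?_, ?_⟩
  · rw [← ha, ← AddCircle.coe_add]; congr 1; ring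
  · rw [← coe_nat_mul, mul_div_cancel₀ _ hN'.ne', AddCircle.coe_add, coe_int, add_zero, hb]
  · exact (torus1_norm_coe_le _).trans h

/-- Separation constants. -/
def eps (n : ℕ) : ℝ := 1 / 4 + 1 / 4 * (1 / 2) ^ n

lemma sep_step (n : ℕ)
    (ih : ∀ s : Torus1, ∃ v : Torus2, eps n ≤ dist (HH n v) (HH n (v + (s, ((1/2 : ℝ) : Torus1)))))
    (s : Torus1) (w : ℝ) (h1 : 2 / (LL n:ℝ) ≤ w) (h2 : w ≤ 1 - 2 / LL n) :
    ∃ v : Torus2, eps (n + 1) ≤ dist (HH (n + 1) v) (HH (n + 1) (v + (s, (w : Torus1)))) := by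
  obtain ⟨σ, hσ, -⟩ := torus1_exists_rep (NN n • s)
  have f0 := Int.fract_nonneg (1 / 2 - σ)
  have f1 := (Int.fract_lt_one (1 / 2 - σ)).le
  obtain ⟨y, hy⟩ := sawtooth_ivt (LL_ge n) h1 h2 (c := w - Int.fract (1 / 2 - σ)) (by linarith) (by linarith)
  have hN := NNr_pos n
  set Δ := betaR (LL n) (y + w) - betaR (LL n) y with hΔ
  obtain ⟨v, hv⟩ := ih (s - ((((NN n : ℝ)⁻¹ * Δ : ℝ)) : Torus1))
  obtain ⟨x, r, hx, hNx, hr⟩ := exists_root_near (NN n) (NN_pos n)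
    (v.1 + (((NN n : ℝ)⁻¹ * betaR (LL n) y : ℝ) : Torus1)) (v.2 - (y : Torus1) + ((betaR (LL n) y : ℝ) : Torus1))
  have hhalf : (w : Torus1) + NN n • s - (Δ : Torus1) = ((1/2 : ℝ) : Torus1) := by
    rw [← hσ, hy, ← AddCircle.coe_add, ← AddCircle.coe_sub]
    have : w + σ - (w - Int.fract (1 / 2 - σ)) = 1 / 2 + ((-⌊1 / 2 - σ⌋ : ℤ) : ℝ) := by
      rw [Int.fract]; push_cast; ring
    rw [this, AddCircle.coe_add, coe_int, add_zero]
  have e1 : hh n (x, (y : Torus1)) = v + (r, 0) := by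
    rw [hh, hT_apply]
    simp only [betaT_coe, hNx]
    ext
    · simp only [Prod.fst_add, hx]; abel
    · simp only [Prod.snd_add]; abel
  have e2 : hh n ((x, (y : Torus1)) + (s, (w : Torus1))) =
      (v + (s - ((((NN n : ℝ)⁻¹ * Δ : ℝ)) : Torus1), ((1/2 : ℝ) : Torus1))) + (r, 0) := by
    rw [hh, hT_apply, ← hhalf]
    simp only [Prod.mk_add_mk, ← AddCircle.coe_add, betaT_coe, smul_add, hNx]
    rw [hΔ, mul_sub, AddCircle.coe_sub, AddCircle.coe_sub, AddCircle.coe_add]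
    ext
    · simp only [Prod.fst_add, hx]; abel
    · simp only [Prod.snd_add]; abel
  refine ⟨(x, (y : Torus1)), ?_⟩
  rw [HH_succ, HH_succ, e1, e2]
  have k1 := HH_lipX n v r
  have k2 := HH_lipX n (v + (s - ((((NN n : ℝ)⁻¹ * Δ : ℝ)) : Torus1), ((1/2 : ℝ) : Torus1))) r
  have k3 : LX n * ‖r‖ ≤ LX n / NN n := by
    rw [div_eq_mul_one_div]
    exact mul_le_mul_of_nonneg_left hr (LX_nonneg n)
  have k4 := LX_div_le n
  have k5 := dist_triangle4 (HH n v) (HH n (v + (r, 0)))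
    (HH n (v + (s - ((((NN n : ℝ)⁻¹ * Δ : ℝ)) : Torus1), ((1/2 : ℝ) : Torus1)) + (r, 0)))
    (HH n (v + (s - ((((NN n : ℝ)⁻¹ * Δ : ℝ)) : Torus1), ((1/2 : ℝ) : Torus1))))
  rw [dist_comm] at k1
  have e3 : eps (n + 1) = eps n - 2 * (1/2) ^ (n + 4) := by unfold eps; ring
  linarith

lemma sep_half (n : ℕ) : ∀ s : Torus1, ∃ v : Torus2,
    eps n ≤ dist (HH n v) (HH n (v + (s, ((1/2 : ℝ) : Torus1)))) := by
  induction n with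
  | zero =>
    intro s
    refine ⟨0, ?_⟩
    rw [HH_zero, HH_zero, zero_add, Prod.dist_eq]
    refine le_trans ?_ (le_max_right _ _)
    have : ‖((1/2 : ℝ) : Torus1)‖ = 1 / 2 := by
      rw [AddCircle.norm_eq]; norm_num [round_eq]
    change eps 0 ≤ dist (0 : Torus1) ((1/2 : ℝ) : Torus1)
    rw [dist_zero_left, this]
    norm_num [eps]
  | succ n ih =>
    intro s
    have hL : (10:ℝ) ≤ LL n := by exact_mod_cast LL_ten n
    have : 2 / (LL n : ℝ) ≤ 2 / 10 := by gcongr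
    exact sep_step n ih s (1 / 2) (by linarith) (by linarith)

lemma sep_orbit (n : ℕ) (w1 w2 : ℝ) (h1 : 2 / (LL n:ℝ) ≤ w2 - w1) (h2 : w2 - w1 ≤ 1 - 2 / LL n) :
    ∃ i < NN (n + 2), 1 / 16 ≤ dist (TT (i : ℤ) (HH (n + 1) (0, (w1 : Torus1))))
      (TT (i : ℤ) (HH (n + 1) (0, (w2 : Torus1)))) := by
  obtain ⟨v, hv⟩ := sep_step n (sep_half n) 0 (w2 - w1) h1 h2
  obtain ⟨i, hi, s, w, e1, e2, hs, hw⟩ := lam_approx (n + 1) (v - (0, (w1 : Torus1)))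
  refine ⟨i, hi, ?_⟩
  have k1 : Ti (n + 2) i (HH (n + 1) (0, (w1 : Torus1))) = HH (n + 1) (v + (s, w)) := by
    rw [Ti, flow_succ, Homeomorph.symm_apply_apply, e2, e1]
    congr 1
    ext
    · simp only [Prod.fst_add, Prod.fst_sub]; abel
    · simp only [Prod.snd_add, Prod.snd_sub]; abel
  have k2 : Ti (n + 2) i (HH (n + 1) (0, (w2 : Torus1))) =
      HH (n + 1) (v + (0, ((w2 - w1 : ℝ) : Torus1)) + (s, w)) := by
    rw [Ti, flow_succ, Homeomorph.symm_apply_apply, e2, e1, AddCircle.coe_sub]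
    congr 1
    ext
    · simp only [Prod.fst_add, Prod.fst_sub]; abel
    · simp only [Prod.snd_add, Prod.snd_sub]; abel
  have d1 := HH_small (n + 1) v s w hs hw
  have d2 := HH_small (n + 1) (v + (0, ((w2 - w1 : ℝ) : Torus1))) s w hs hw
  rw [← k1] at d1
  rw [← k2] at d2
  have d3 := TT_close (n + 2) i hi (HH (n + 1) (0, (w1 : Torus1)))
  have d4 := TT_close (n + 2) i hi (HH (n + 1) (0, (w2 : Torus1)))
  have p1 : (1/2:ℝ) ^ (n + 1 + 3) ≤ (1/2) ^ 4 :=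
    pow_le_pow_of_le_one (by norm_num) (by norm_num) (by omega)
  have p2 : (1/2:ℝ) ^ (n + 2 + 4) ≤ (1/2) ^ 6 :=
    pow_le_pow_of_le_one (by norm_num) (by norm_num) (by omega)
  have p3 : 1 / 4 ≤ eps (n + 1) := by unfold eps; have : (0:ℝ) ≤ (1/2) ^ (n + 1) := by positivity
                                      linarith
  set a := Ti (n + 2) i (HH (n + 1) (0, (w1 : Torus1)))
  set b := Ti (n + 2) i (HH (n + 1) (0, (w2 : Torus1)))
  set a' := TT i (HH (n + 1) (0, (w1 : Torus1)))
  set b' := TT i (HH (n + 1) (0, (w2 : Torus1)))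
  set va := HH (n + 1) v
  set vb := HH (n + 1) (v + (0, ((w2 - w1 : ℝ) : Torus1)))
  have t1 := dist_triangle4 va a b vb
  have t2 := dist_triangle4 a a' b' b
  rw [dist_comm va a] at t1
  rw [dist_comm b' b] at t2
  norm_num at p1 p2
  linarith

lemma bowen_lt {m : ℕ} {x y : Torus2} {ε : ℝ} (hε : 0 < ε)
    (h : ∀ i < m, dist (TT (i : ℤ) x) (TT (i : ℤ) y) < ε) : bowenDist (TT 1) m x y < ε := by
  lift ε to ℝ≥0 using hε.le
  unfold bowenDist
  rw [NNReal.coe_lt_coe, Finset.sup_lt_iff (by exact_mod_cast hε)]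
  intro i hi
  rw [TT_iterate, TT_iterate, ← NNReal.coe_lt_coe, coe_nndist]
  exact h i (Finset.mem_range.1 hi)

lemma bowen_le {m : ℕ} {x y : Torus2} {i : ℕ} (hi : i < m) :
    dist (TT (i : ℤ) x) (TT (i : ℤ) y) ≤ bowenDist (TT 1) m x y := by
  unfold bowenDist
  rw [← TT_iterate, ← TT_iterate, ← coe_nndist, NNReal.coe_le_coe]
  exact Finset.le_sup (f := fun i => nndist ((TT 1)^[i] x) ((TT 1)^[i] y)) (Finset.mem_range.2 hi)

lemma cover_lower (n : ℕ) {ε : ℝ} (hε : ε ≤ 1 / 32) (F : Finset Torus2)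
    (hF : ∀ y : Torus2, ∃ x ∈ F, bowenDist (TT 1) (NN (n + 2)) x y < ε) : LL n / 2 ≤ F.card := by
  have hL : (10:ℝ) ≤ LL n := by exact_mod_cast LL_ten n
  set q : ℕ → Torus2 := fun k => HH (n + 1) (0, ((2 * k / LL n : ℝ) : Torus1)) with hq
  choose g hg hg' using hF
  have hkey : ∀ k k' : ℕ, k < k' → k' < LL n / 2 → g (q k) ≠ g (q k') := by
    intro k k' hk hk' heq
    have n1 : 1 + k ≤ k' := by omega
    have n2 : 2 * k' + 2 ≤ LL n := by omega
    have n1' : (1:ℝ) + k ≤ k' := by exact_mod_cast n1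
    have n2' : (2:ℝ) * k' + 2 ≤ LL n := by exact_mod_cast n2
    have hk0 : (0:ℝ) ≤ k := by positivity
    have hL0 : (0:ℝ) < LL n := by linarith
    obtain ⟨i, hi, hsep⟩ := sep_orbit n (2 * k / LL n) (2 * k' / LL n)
      (by rw [← sub_div]; gcongr; linarith)
      (by
        have e : (1:ℝ) - 2 / LL n = (LL n - 2) / LL n := by field_simp
        rw [← sub_div, e]; exact div_le_div_of_nonneg_right (by linarith) hL0.le)
    have b1 := (bowen_le hi).trans_lt (hg' (q k))
    have b2 := (bowen_le hi).trans_lt (hg' (q k'))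
    rw [← heq] at b2
    have := dist_triangle_left (TT (i : ℤ) (q k)) (TT (i : ℤ) (q k')) (TT (i : ℤ) (g (q k)))
    have hsep' : 1 / 16 ≤ dist (TT (i : ℤ) (q k)) (TT (i : ℤ) (q k')) := hsep
    linarith
  have := Finset.card_le_card_of_injOn (s := Finset.range (LL n / 2)) (t := F) (fun k => g (q k))
    (fun k _ => hg _) (by
      intro k hk k' hk' heq
      simp only [Finset.coe_range, mem_Iio] at hk hk'
      rcases lt_trichotomy k k' with h | h | h
      · exact absurd heq (hkey k k' h hk')
      · exact h
      · exact absurd heq.symm (hkey k' k h hk))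
  simpa using this

/-! ### Entropy: upper bound -/

lemma cover_upper {ε : ℝ} (hε : 0 < ε) (hε1 : ε ≤ 1) (m n : ℕ) (hm : m * rho (n + 2) ≤ ε / 5) :
    ∃ F : Finset Torus2, (F.card : ℝ) ≤ 121 * cB / ε ^ 2 * (KK n ^ 2 * NN n * LL n) ∧
      ∀ y : Torus2, ∃ x ∈ F, bowenDist (TT 1) m x y < ε := by
  have hK := KK_one_le n
  have hN := NN_one_le n
  have hc := cB_one_le
  have hL : (10:ℝ) ≤ LL n := by exact_mod_cast LL_ten n
  have hKN : 1 ≤ KK n * NN n := one_le_mul_of_one_le_of_one_le hK hN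
  have hKL : 1 ≤ cB * KK n * LL n := one_le_mul_of_one_le_of_one_le
    (one_le_mul_of_one_le_of_one_le hc hK) (by linarith)
  set A : ℕ := ⌈10 * (KK n * NN n) / ε⌉₊ with hA
  set B : ℕ := ⌈10 * (cB * KK n * LL n) / ε⌉₊ with hB
  have hA0 : 0 < A := Nat.ceil_pos.2 (by positivity)
  have hB0 : 0 < B := Nat.ceil_pos.2 (by positivity)
  have hA0r : (0:ℝ) < A := by exact_mod_cast hA0
  have hB0r : (0:ℝ) < B := by exact_mod_cast hB0
  have hA1 : 10 * (KK n * NN n) / ε ≤ A := Nat.le_ceil _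
  have hB1 : 10 * (cB * KK n * LL n) / ε ≤ B := Nat.le_ceil _
  have hA2 : (A:ℝ) ≤ 11 * (KK n * NN n) / ε := by
    have h := (Nat.ceil_lt_add_one (a := 10 * (KK n * NN n) / ε) (by positivity)).le
    refine h.trans ?_
    rw [← sub_nonneg]
    have : 11 * (KK n * NN n) / ε - (10 * (KK n * NN n) / ε + 1) = (KK n * NN n - ε) / ε := by field_simp; ring
    rw [this]; apply div_nonneg _ hε.le; linarith
  have hB2 : (B:ℝ) ≤ 11 * (cB * KK n * LL n) / ε := by
    have h := (Nat.ceil_lt_add_one (a := 10 * (cB * KK n * LL n) / ε) (by positivity)).le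
    refine h.trans ?_
    rw [← sub_nonneg]
    have : 11 * (cB * KK n * LL n) / ε - (10 * (cB * KK n * LL n) / ε + 1) = (cB * KK n * LL n - ε) / ε := by
      field_simp; ring
    rw [this]; apply div_nonneg _ hε.le; linarith
  have hgrid : ∀ (M : ℕ), 0 < M → ∀ x : Torus1, ∃ a < M, ‖x - ((a / M : ℝ) : Torus1)‖ ≤ 1 / M := by
    intro M hM x
    induction x using QuotientAddGroup.induction_on with
    | H x =>
      change ∃ a < M, ‖(x : Torus1) - ((a / M : ℝ) : Torus1)‖ ≤ 1 / M
      have hM' : (0:ℝ) < M := by exact_mod_cast hM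
      have hx : (x : Torus1) = ((Int.fract x : ℝ) : Torus1) := by
        conv_lhs => rw [← Int.fract_add_floor x, AddCircle.coe_add, coe_int, add_zero]
      have g0 := Int.fract_nonneg x
      have g1 := Int.fract_lt_one x
      refine ⟨⌊(M:ℝ) * Int.fract x⌋₊, ?_, ?_⟩
      · rw [Nat.floor_lt (by positivity)]
        exact mul_lt_of_lt_one_right hM' g1
      · rw [hx, ← AddCircle.coe_sub]
        refine (torus1_norm_coe_le _).trans ?_
        have := floor_approx M hM (Int.fract x)
        rw [abs_sub_comm]
        rwa [← natCast_floor_eq_intCast_floor (by positivity)] at this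
  classical
  refine ⟨(Finset.range A ×ˢ Finset.range B).image
    (fun p => HH (n + 1) (((p.1 / A : ℝ) : Torus1), ((p.2 / B : ℝ) : Torus1))), ?_, ?_⟩
  · have h1 : (((Finset.range A ×ˢ Finset.range B).image
      (fun p : ℕ × ℕ => HH (n + 1) (((p.1 / A : ℝ) : Torus1), ((p.2 / B : ℝ) : Torus1)))).card : ℝ) ≤ A * B := by
      have := Finset.card_image_le (s := Finset.range A ×ˢ Finset.range B)
        (f := fun p : ℕ × ℕ => HH (n + 1) (((p.1 / A : ℝ) : Torus1), ((p.2 / B : ℝ) : Torus1)))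
      rw [Finset.card_product, Finset.card_range, Finset.card_range] at this
      exact_mod_cast this
    refine h1.trans ?_
    calc (A:ℝ) * B ≤ (11 * (KK n * NN n) / ε) * (11 * (cB * KK n * LL n) / ε) :=
          mul_le_mul hA2 hB2 hB0r.le (by positivity)
      _ = _ := by field_simp; ring
  · intro z
    obtain ⟨a, ha, ha'⟩ := hgrid A hA0 ((HH (n + 1)).symm z).1
    obtain ⟨b, hb, hb'⟩ := hgrid B hB0 ((HH (n + 1)).symm z).2
    refine ⟨_, Finset.mem_image_of_mem _ (Finset.mk_mem_product (Finset.mem_range.2 ha) (Finset.mem_range.2 hb)), ?_⟩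
    refine bowen_lt hε fun i hi => ?_
    set z' := HH (n + 1) (((a / A : ℝ) : Torus1), ((b / B : ℝ) : Torus1)) with hz'
    have hTT : ∀ y, dist (Ti (n + 2) (i : ℤ) y) (TT (i : ℤ) y) ≤ ε / 5 := by
      intro y
      refine (TT_dist (n + 2) i y).trans (le_trans ?_ hm)
      refine mul_le_mul_of_nonneg_right ?_ (rho_nonneg _)
      rw [Int.cast_natCast, abs_of_nonneg (by positivity)]
      exact_mod_cast hi.le
    have hmid : dist (Ti (n + 2) (i : ℤ) z') (Ti (n + 2) (i : ℤ) z) ≤ 2 * ε / 5 := by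
      rw [Ti, flow_succ, Ti, flow_succ, hz', Homeomorph.symm_apply_apply, HH_succ, HH_succ]
      refine (HH_lip n _ _).trans ?_
      have := hT_dist (hN := NN_pos n) (hL := LL_ge n)
        ((((a / A : ℝ) : Torus1), ((b / B : ℝ) : Torus1)) +
          ((((i : ℤ) * alf (n + 1 + 1) : ℝ) : Torus1), NN (n + 1) • (((i : ℤ) * alf (n + 1 + 1) : ℝ) : Torus1)))
        ((HH (n + 1)).symm z +
          ((((i : ℤ) * alf (n + 1 + 1) : ℝ) : Torus1), NN (n + 1) • (((i : ℤ) * alf (n + 1 + 1) : ℝ) : Torus1)))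
      simp only [Prod.fst_add, Prod.snd_add, add_sub_add_right_eq_sub] at this
      rw [norm_sub_rev (((a / A : ℝ) : Torus1)), norm_sub_rev (((b / B : ℝ) : Torus1))] at this
      have hle : 2 * (NN n : ℝ) * ‖((HH (n + 1)).symm z).1 - ((a / A : ℝ) : Torus1)‖ +
          2 * cB * LL n * ‖((HH (n + 1)).symm z).2 - ((b / B : ℝ) : Torus1)‖ ≤
          2 * NN n * (1 / A) + 2 * cB * LL n * (1 / B) := by gcongr
      refine (mul_le_mul_of_nonneg_left (this.trans hle) (by linarith)).trans ?_
      have q1 : KK n * NN n / A ≤ ε / 10 := by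
        rw [div_le_iff₀ hA0r]
        rw [div_le_iff₀ hε] at hA1
        linarith
      have q2 : cB * KK n * LL n / B ≤ ε / 10 := by
        rw [div_le_iff₀ hB0r]
        rw [div_le_iff₀ hε] at hB1
        linarith
      have : KK n * (2 * NN n * (1 / A) + 2 * cB * LL n * (1 / B)) =
        2 * (KK n * NN n / A) + 2 * (cB * KK n * LL n / B) := by ring
      rw [this]; linarith
    have t1 := hTT z
    have t2 := hTT z'
    have t3 := dist_triangle4 (TT (i : ℤ) z') (Ti (n + 2) (i : ℤ) z') (Ti (n + 2) (i : ℤ) z) (TT (i : ℤ) z)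
    rw [dist_comm] at t2
    linarith

end


open MeasureTheory Filter Set
open scoped Topology ENNReal NNReal ContDiff

noncomputable section

/-! ### Entropy: conclusion -/

lemma rho_pos (n : ℕ) : 0 < rho n := by
  have h1 : 0 < ee (n + 0) := by
    unfold ee
    have := KK_one_le (n + 0)
    have := NNr_pos (n + 0)
    have := NNr_pos (n + 0 + 1)
    positivity
  refine h1.trans_le ?_
  have hs : Summable fun k => ee (n + k) := by
    simpa [add_comm] using (summable_nat_add_iff n).2 ee_summable
  exact hs.le_tsum 0 (fun j _ => ee_nonneg _)

lemma exists_scale {ε : ℝ} (hε : 0 < ε) (m : ℕ) : ∃ n, m * rho (n + 2) ≤ ε / 5 := by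
  have h : Tendsto (fun n => (m : ℝ) * rho (n + 2)) atTop (𝓝 (m * 0)) :=
    (((tendsto_add_atTop_iff_nat 2).2 rho_tendsto)).const_mul _
  rw [mul_zero] at h
  exact (h.eventually (ge_mem_nhds (by positivity))).exists

lemma coverNum_lower {ε : ℝ} (hε0 : 0 < ε) (hε : ε ≤ 1 / 32) (n : ℕ) :
    LL n / 2 ≤ bowenCoverNum (TT 1) (NN (n + 2)) ε := by
  refine le_csInf ?_ ?_
  · obtain ⟨k, hk⟩ := exists_scale hε0 (NN (n + 2))
    obtain ⟨F, -, hF⟩ := cover_upper hε0 (by linarith) _ k hk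
    exact ⟨_, F, rfl, hF⟩
  · rintro b ⟨F, rfl, hF⟩
    exact cover_lower n hε F hF

lemma coverNum_upper {ε : ℝ} (hε : 0 < ε) (hε1 : ε ≤ 1) (m n : ℕ) (hm : m * rho (n + 2) ≤ ε / 5) :
    (bowenCoverNum (TT 1) m ε : ℝ) ≤ 121 * cB / ε ^ 2 * (KK n ^ 2 * NN n * LL n) := by
  obtain ⟨F, hc, hF⟩ := cover_upper hε hε1 m n hm
  refine le_trans ?_ hc
  have : bowenCoverNum (TT 1) m ε ≤ F.card := Nat.sInf_le ⟨F, rfl, hF⟩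
  exact_mod_cast this

lemma coverNum_log {ε : ℝ} (hε : 0 < ε) (hε1 : ε ≤ 1) {δ : ℝ} (hδ : 0 < δ) :
    ∃ C : ℝ, ∀ᶠ m : ℕ in atTop,
      (bowenCoverNum (TT 1) m ε : ℝ) ≤ C * Real.log m ^ (1 + δ) := by
  refine ⟨121 * cB / ε ^ 2 * 3 ^ (1 + δ), ?_⟩
  obtain ⟨n0, hn0⟩ : ∃ n0 : ℕ, 1 / δ ≤ n0 ∧ (1 / 2 : ℝ) ^ n0 ≤ ε / 5 := by
    have h1 : ∀ᶠ n : ℕ in atTop, 1 / δ ≤ n := tendsto_natCast_atTop_atTop.eventually_ge_atTop _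
    have h2 : ∀ᶠ n : ℕ in atTop, (1 / 2 : ℝ) ^ n ≤ ε / 5 :=
      (tendsto_pow_atTop_nhds_zero_of_lt_one (by norm_num) (by norm_num)).eventually
        (ge_mem_nhds (by positivity))
    exact (h1.and h2).exists
  obtain ⟨hn1, hn2⟩ := hn0
  have hev : ∀ᶠ m : ℕ in atTop, ∀ n ∈ Finset.range (n0 + 1), ε / 5 < m * rho (n + 2) := by
    rw [Finset.eventually_all]
    intro n _
    exact (tendsto_natCast_atTop_atTop.atTop_mul_const (rho_pos _)).eventually_gt_atTop _
  filter_upwards [hev, eventually_ge_atTop 3] with m hm hm3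
  classical
  have hex := exists_scale hε m
  obtain ⟨n, hn, hmin⟩ : ∃ n, m * rho (n + 2) ≤ ε / 5 ∧ ∀ k < n, ¬ (m * rho (k + 2) ≤ ε / 5) :=
    ⟨Nat.find hex, Nat.find_spec hex, fun k hk => Nat.find_min hex hk⟩
  have hnn : n0 < n := by
    by_contra! hcon
    exact absurd hn (not_le.2 (hm n (Finset.mem_range.2 (by omega))))
  obtain ⟨k, rfl⟩ : ∃ k, n = k + 1 := ⟨n - 1, by omega⟩
  have hk := hmin k (by omega)
  push Not at hk
  have hr := rho_le_a (k + 2)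
  have hm0 : (0:ℝ) < m := by exact_mod_cast (by omega : 0 < m)
  have hN0 : (0:ℝ) < NN (k + 1 + 2) := NNr_pos _
  have hsq : (0:ℝ) < √(NN (k + 1 + 2)) := Real.sqrt_pos.2 hN0
  have hp : (1 / 2 : ℝ) ^ (k + 2 + 4) ≤ ε / 5 :=
    (pow_le_pow_of_le_one (by norm_num) (by norm_num) (by omega)).trans hn2
  have hlt : √(NN (k + 1 + 2)) < (m : ℝ) := by
    have h1 : ε / 5 < m * ((ε / 5) / √(NN (k + 1 + 2))) := by
      refine hk.trans_le (mul_le_mul_of_nonneg_left (hr.trans ?_) hm0.le)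
      exact div_le_div_of_nonneg_right hp hsq.le
    have h2 : m * ((ε / 5) / √(NN (k + 1 + 2))) = (ε / 5) * (m / √(NN (k + 1 + 2))) := by ring
    rw [h2] at h1
    have h3 : 1 < m / √(NN (k + 1 + 2)) := by
      by_contra! hcon
      have : (ε / 5) * (m / √(NN (k + 1 + 2))) ≤ (ε / 5) * 1 :=
        mul_le_mul_of_nonneg_left hcon (by positivity)
      linarith
    rwa [one_lt_div hsq] at h3
  have hlogm : 0 < Real.log m := Real.log_pos (by exact_mod_cast (by omega : 1 < m))
  have hLL : (LL (k + 1) : ℝ) ≤ 3 * Real.log m := by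
    have h1 : (NN (k + 1 + 2) : ℝ) ≤ (m : ℝ) ^ 2 := by
      rw [← Real.sq_sqrt hN0.le]
      exact pow_le_pow_left₀ hsq.le hlt.le 2
    have h2 := Real.log_le_log hN0 h1
    rw [NN_succ2, Nat.cast_pow, Real.log_pow, Real.log_pow] at h2
    push_cast at h2
    have := Real.log_two_gt_d9
    have hL0 : (0:ℝ) ≤ LL (k + 1) := by positivity
    nlinarith
  have hL1 : (1:ℝ) ≤ LL (k + 1) := by
    have := LL_ten (k + 1)
    exact_mod_cast (by omega : 1 ≤ LL (k + 1))
  have hX0 : 0 ≤ KK (k + 1) ^ 2 * NN (k + 1) := by positivity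
  have hX : KK (k + 1) ^ 2 * NN (k + 1) ≤ (LL (k + 1) : ℝ) ^ δ := by
    have h1 := Real.rpow_le_rpow (by positivity) (LL_big (k + 1))
      (z := (((k + 1 : ℕ) : ℝ))⁻¹) (by positivity)
    rw [Real.pow_rpow_inv_natCast hX0 (by omega)] at h1
    refine h1.trans (Real.rpow_le_rpow_of_exponent_le hL1 ?_)
    have : 1 / δ ≤ ((k + 1 : ℕ) : ℝ) := hn1.trans (by exact_mod_cast hnn.le)
    rw [inv_le_comm₀ (by positivity) hδ, ← one_div]
    exact this
  refine (coverNum_upper hε hε1 m (k + 1) hn).trans ?_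
  have hc := cB_one_le
  rw [mul_assoc (121 * cB / ε ^ 2)]
  refine mul_le_mul_of_nonneg_left ?_ (by positivity)
  rw [← Real.mul_rpow (by norm_num) hlogm.le]
  calc KK (k + 1) ^ 2 * NN (k + 1) * LL (k + 1) ≤ (LL (k + 1) : ℝ) ^ δ * LL (k + 1) := by gcongr
    _ = (LL (k + 1) : ℝ) ^ (1 + δ) := by
      rw [Real.rpow_add (by linarith), Real.rpow_one, mul_comm]
    _ ≤ _ := Real.rpow_le_rpow (by linarith) hLL (by linarith)

lemma slow_mem {ε : ℝ} (hε0 : 0 < ε) (hε : ε ≤ 1 / 32) :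
    0 < Filter.atTop.limsup fun n =>
      (bowenCoverNum (TT 1) n ε : ℝ≥0∞) / ENNReal.ofReal (logScale n 1) := by
  have hfr : ∃ᶠ m : ℕ in atTop, (4 : ℝ≥0∞)⁻¹ ≤
      (bowenCoverNum (TT 1) m ε : ℝ≥0∞) / ENNReal.ofReal (logScale m 1) := by
    rw [frequently_atTop]
    intro a
    have hL := LL_ten a
    refine ⟨NN (a + 2), ?_, ?_⟩
    · rw [NN_succ2]
      exact ((Nat.lt_two_pow_self (n := a)).le.trans (LL_pow a)).trans (Nat.lt_two_pow_self).le
    · have h1 := coverNum_lower hε0 hε a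
      have h2 : LL a ≤ 4 * bowenCoverNum (TT 1) (NN (a + 2)) ε := by omega
      have h2' : (LL a : ℝ≥0∞) ≤ 4 * bowenCoverNum (TT 1) (NN (a + 2)) ε := by exact_mod_cast h2
      have hlog : ENNReal.ofReal (logScale (NN (a + 2)) 1) ≤ LL a := by
        rw [logScale, Real.rpow_one, NN_succ2, Nat.cast_pow, Real.log_pow]
        refine ENNReal.ofReal_le_of_le_toReal ?_
        rw [ENNReal.toReal_natCast]
        have := Real.log_two_lt_d9
        push_cast
        have hL0 : (0:ℝ) ≤ LL a := by positivity
        nlinarith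
      calc (4 : ℝ≥0∞)⁻¹ ≤ (bowenCoverNum (TT 1) (NN (a + 2)) ε : ℝ≥0∞) / LL a := by
            rw [ENNReal.le_div_iff_mul_le (Or.inl (by exact_mod_cast (by omega : LL a ≠ 0)))
              (Or.inl (ENNReal.natCast_ne_top _)), mul_comm, ← div_eq_mul_inv]
            exact ENNReal.div_le_of_le_mul' h2'
        _ ≤ _ := ENNReal.div_le_div_left hlog _
  have := le_limsup_of_frequently_le hfr
  exact lt_of_lt_of_le (by simp) this

lemma slow_not_mem {ε : ℝ} (hε0 : 0 < ε) (hε : ε ≤ 1) {t : ℝ} (ht : 1 < t) :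
    (Filter.atTop.limsup fun n =>
      (bowenCoverNum (TT 1) n ε : ℝ≥0∞) / ENNReal.ofReal (logScale n t)) = 0 := by
  obtain ⟨C, hC⟩ := coverNum_log hε0 hε (δ := (t - 1) / 2) (by linarith)
  apply Tendsto.limsup_eq
  have hlog : Tendsto (fun m : ℕ => Real.log m) atTop atTop :=
    Real.tendsto_log_atTop.comp tendsto_natCast_atTop_atTop
  have hz : Tendsto (fun m : ℕ => C * Real.log m ^ (-((t - 1) / 2))) atTop (𝓝 (C * 0)) :=
    ((tendsto_rpow_neg_atTop (by linarith)).comp hlog).const_mul C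
  rw [mul_zero] at hz
  have hz' := ENNReal.tendsto_ofReal hz
  rw [ENNReal.ofReal_zero] at hz'
  refine tendsto_of_tendsto_of_tendsto_of_le_of_le' tendsto_const_nhds hz'
    (Eventually.of_forall fun _ => zero_le) ?_
  filter_upwards [hC, hlog.eventually_gt_atTop 0] with m hm hl
  have hlt : 0 < Real.log m ^ t := Real.rpow_pos_of_pos hl t
  rw [logScale, ← ENNReal.ofReal_natCast, ← ENNReal.ofReal_div_of_pos hlt]
  refine ENNReal.ofReal_le_ofReal ?_
  rw [div_le_iff₀ hlt, mul_assoc, ← Real.rpow_add hl]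
  have he : -((t - 1) / 2) + t = 1 + (t - 1) / 2 := by ring
  rw [he]
  exact hm

lemma slow_eq_one {ε : ℝ} (hε0 : 0 < ε) (hε : ε ≤ 1 / 32) :
    topSlowEntFun (TT 1) logScale ε = 1 := by
  refine IsGreatest.csSup_eq ⟨⟨one_pos, slow_mem hε0 hε⟩, ?_⟩
  rintro t ⟨-, ht⟩
  by_contra! hcon
  rw [slow_not_mem hε0 (by linarith) hcon] at ht
  exact lt_irrefl _ ht

lemma TT_entropy : HasUpperTopSlowEntropy (TT 1) logScale 1 := by
  refine tendsto_const_nhds.congr' ?_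
  filter_upwards [Ioc_mem_nhdsGT (show (0:ℝ) < 1 / 32 by norm_num)] with ε hε
  exact (slow_eq_one hε.1 hε.2).symm

end

/-- There exists a uniquely ergodic `C^∞` diffeomorphism `T` of `𝕋²` whose
unique invariant Borel probability measure is the Haar–Lebesgue measure,
measure-theoretically isomorphic to an irrational circle rotation, whose upper
topological slow entropy w.r.t. the logarithmic scale `a^{ln}_m(t) = (ln m)^t` equals `1`. -/
theorem stmt8 :
    ∃ T : Torus2 → Torus2,
      IsCkTorusDiffeo ⊤ T ∧
      UniquelyErgodicWithVolume T ∧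
      IsoToIrrationalRotation T ∧
      HasUpperTopSlowEntropy T logScale 1 := by
  exact ⟨TT 1, TT_diffeo, TT_ue, TT_iso, TT_entropy⟩
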